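/- arXiv:2407.10051 — 3 statements merged into one kernel-verified Lean document; each statement's English description precedes it below -/
import Mathlib

section
/- Let a be a nonzero element of the prime subfield F_p ⊆ F_q, let b ∈ F_q^*, and let v ∈ Γ satisfy Tr_{q/t}(bv) = 0. If Tr(v^{p^t−1}) = 0, then N(a,b) = p^{2m−2} − 1 + (p^{m−2} + p^{m+t−2})(p−1) − p^{m−2}·S. -/
open Finset

/-!
Write `Q = #E` and `Δ = {x | x ^ (Q + 1) = 1}`, the kernel of the norm from `F` to `E`.
Eliminating `x` from the two trace equations leaves the condition `Tr (b y) = a Tr (y ^ (Q - 1))`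
on `y` alone. By Hilbert 90, `y ↦ y ^ (Q - 1)` maps `Fˣ` onto `Δ`, and its fibres are the
punctured `E`-lines, so the right-hand side is constant on each of them. On the line `E u` the
left-hand side is the `K`-linear form `s ↦ Tr (s Tr_{F/E} (b u))` of `s ∈ E`; it is nonzero, hence
equidistributed, except on the single line through `v`, where it vanishes identically. Removing
`y = 0` from every line produces a correction counting the `x ∈ Δ` with `Tr x = 0`, and by
orthogonality of characters this number is what `S` measures.
-/

theorem trace_smul_eq_trace_mul_trace {R S T : Type*} [CommRing R] [CommRing S] [CommRing T]
    [Algebra R S] [Algebra S T] [Algebra R T] [IsScalarTower R S T] [Module.Free R S]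
    [Module.Finite R S] [Module.Free S T] [Module.Finite S T] (s : S) (x : T) :
    Algebra.trace R T (s • x) = Algebra.trace R S (s * Algebra.trace S T x) := by
  rw [← Algebra.trace_trace (S := S), map_smul, smul_eq_mul]

section FiniteFieldExtension

variable {E F : Type*} [Field E] [Field F] [Finite F] [Algebra E F]

theorem mem_range_algebraMap_iff_pow_natCard_eq (x : F) :
    x ∈ Set.range (algebraMap E F) ↔ x ^ Nat.card E = x := by
  have : Finite E := Finite.of_injective _ (algebraMap E F).injective
  have := Fintype.ofFinite E
  rw [IsGalois.mem_range_algebraMap_iff_fixed, ← Fintype.card_eq_nat_card]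
  refine ⟨fun h => h (FiniteField.frobeniusAlgEquivOfAlgebraic E F), fun h σ => ?_⟩
  obtain ⟨n, rfl⟩ := (FiniteField.bijective_frobeniusAlgEquivOfAlgebraic_pow E F).surjective σ
  rw [AlgEquiv.coe_pow]
  exact Function.iterate_fixed h n

theorem pow_natCard_sub_one_eq_iff_exists_smul {u y : F} (hu : u ≠ 0) (hy : y ≠ 0) :
    y ^ (Nat.card E - 1) = u ^ (Nat.card E - 1) ↔ ∃ s : E, s • u = y := by
  have : Finite E := Finite.of_injective _ (algebraMap E F).injective
  have hcard : Nat.card E - 1 + 1 = Nat.card E := Nat.sub_add_cancel Nat.card_pos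
  calc y ^ (Nat.card E - 1) = u ^ (Nat.card E - 1)
      ↔ (y / u) ^ (Nat.card E - 1) = 1 := by rw [div_pow, div_eq_one_iff_eq (pow_ne_zero _ hu)]
    _ ↔ (y / u) ^ Nat.card E = y / u := by
      rw [← hcard, pow_succ, Nat.add_sub_cancel, mul_eq_right₀ (div_ne_zero hy hu)]
    _ ↔ ∃ s : E, s • u = y := by
      rw [← mem_range_algebraMap_iff_pow_natCard_eq, Set.mem_range]
      simp only [Algebra.smul_def, eq_div_iff hu]

theorem norm_eq_one_iff_exists_pow_natCard_sub_one (x : F) :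
    Algebra.norm E x = 1 ↔ ∃ u : F, u ≠ 0 ∧ u ^ (Nat.card E - 1) = x := by
  have : Finite E := Finite.of_injective _ (algebraMap E F).injective
  have := Fintype.ofFinite E
  constructor
  · intro hx
    have hx0 : x ≠ 0 := Algebra.norm_ne_zero_iff.1 (hx ▸ one_ne_zero)
    obtain ⟨g, hg⟩ := IsCyclic.exists_generator (α := Fˣ)
    have hnorm_g : ∀ e : Eˣ, e ∈ Subgroup.zpowers (Units.map (Algebra.norm E) g) := by
      intro e
      obtain ⟨f, rfl⟩ := FiniteField.unitsMap_norm_surjective E F e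
      obtain ⟨k, rfl⟩ := hg f
      exact ⟨k, (map_zpow _ g k).symm⟩
    obtain ⟨k, hk⟩ := (mem_powers_iff_mem_zpowers (x := g)).2 (hg (Units.mk0 x hx0))
    replace hk : (g : F) ^ k = x := congrArg Units.val hk
    have hdvd : Nat.card E - 1 ∣ k := by
      rw [← Nat.card_units, ← orderOf_eq_card_of_forall_mem_zpowers hnorm_g]
      refine orderOf_dvd_of_pow_eq_one (Units.ext ?_)
      rw [← map_pow, Units.coe_map, Units.val_pow_eq_pow_val, hk]
      exact hx
    obtain ⟨j, rfl⟩ := hdvd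
    exact ⟨(g : F) ^ j, pow_ne_zero _ g.ne_zero, by rw [← pow_mul, mul_comm, hk]⟩
  · rintro ⟨u, hu, rfl⟩
    rw [map_pow, ← Fintype.card_eq_nat_card]
    exact FiniteField.pow_card_sub_one_eq_one _ (Algebra.norm_ne_zero_iff.2 hu)

theorem norm_eq_one_iff_pow_natCard_add_one (h2 : Module.finrank E F = 2) (x : F) :
    Algebra.norm E x = 1 ↔ x ^ (Nat.card E + 1) = 1 := by
  rw [← map_eq_one_iff _ (algebraMap E F).injective, FiniteField.algebraMap_norm_eq_pow_sum, h2,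
    sum_range_succ, sum_range_one, pow_zero, pow_one, add_comm]

theorem trace_eq_zero_iff_pow_natCard_sub_one (h2 : Module.finrank E F = 2) {w : F} (hw : w ≠ 0) :
    Algebra.trace E F w = 0 ↔ w ^ (Nat.card E - 1) = -1 := by
  have : Finite E := Finite.of_injective _ (algebraMap E F).injective
  have htrace : algebraMap E F (Algebra.trace E F w) = (w ^ (Nat.card E - 1) + 1) * w := by
    rw [FiniteField.algebraMap_trace_eq_sum_pow, h2, sum_range_succ, sum_range_one, pow_zero,
      pow_one, pow_one, add_one_mul, ← pow_succ, Nat.sub_add_cancel Nat.card_pos, add_comm]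
  rw [← map_eq_zero (algebraMap E F), htrace, mul_eq_zero_iff_right hw, eq_neg_iff_add_eq_zero]

theorem trace_mul_eq_zero_iff_pow_eq (h2 : Module.finrank E F = 2) {b u v : F} (hb : b ≠ 0)
    (hu : u ≠ 0) (hv : v ≠ 0) (hbv : Algebra.trace E F (b * v) = 0) :
    Algebra.trace E F (b * u) = 0 ↔ u ^ (Nat.card E - 1) = v ^ (Nat.card E - 1) := by
  rw [trace_eq_zero_iff_pow_natCard_sub_one h2 (mul_ne_zero hb hv)] at hbv
  rw [trace_eq_zero_iff_pow_natCard_sub_one h2 (mul_ne_zero hb hu), ← hbv, mul_pow, mul_pow,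
    mul_right_inj' (pow_ne_zero _ hb)]

theorem finrank_eq_of_natCard_eq_pow {n : ℕ} (h : Nat.card F = Nat.card E ^ n) :
    Module.finrank E F = n := by
  have : Finite E := Finite.of_injective _ (algebraMap E F).injective
  rw [Module.natCard_eq_pow_finrank (K := E)] at h
  exact Nat.pow_right_injective Finite.one_lt_card h

end FiniteFieldExtension

section Counting

theorem card_fiber_mul_card_of_surjective {G H : Type*} [AddGroup G] [AddGroup H] [Fintype G]
    [Fintype H] [DecidableEq H] {f : G →+ H} (hf : Function.Surjective f) (c : H) :
    #{g | f g = c} * Fintype.card H = Fintype.card G := by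
  have hfib (d : H) : #{g | f g = d} = #{g | f g = c} :=
    AddMonoidHom.card_fiber_eq_of_mem_range f (hf d) (hf c)
  calc #{g | f g = c} * Fintype.card H
      = ∑ d : H, #{g | f g = d} := by
        rw [sum_congr rfl fun d _ => hfib d, sum_const, card_univ, smul_eq_mul, mul_comm]
    _ = Fintype.card G := (card_eq_sum_card_fiberwise fun _ _ => mem_coe.2 (mem_univ _)).symm

theorem card_filter_add_eq_zero_and {G K Y : Type*} [AddGroup G] [Fintype G]
    [NonUnitalNonAssocRing K] [Fintype K] [DecidableEq K] [Fintype Y]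
    {f : G →+ K} (hf : Function.Surjective f) (a : K) (β γ : Y → K) :
    #{xy : G × Y | f xy.1 + γ xy.2 = 0 ∧ a * f xy.1 + β xy.2 = 0} * Fintype.card K
      = #{y | β y = a * γ y} * Fintype.card G := by
  have hsolve (x : G) (y : Y) : (f x + γ y = 0 ∧ a * f x + β y = 0) ↔
      β y = a * γ y ∧ f x = -γ y := by
    rw [← eq_neg_iff_add_eq_zero, and_comm]
    refine and_congr_left fun h => ?_
    rw [h, mul_neg, neg_add_eq_zero, eq_comm]
  have hfib (y : Y) : (∑ x, if β y = a * γ y ∧ f x = -γ y then 1 else 0) * Fintype.card K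
      = if β y = a * γ y then Fintype.card G else 0 := by
    split_ifs with h
    · simp only [h, true_and, ← card_filter]
      exact card_fiber_mul_card_of_surjective hf _
    · simp only [h, false_and, if_false, sum_const_zero, zero_mul]
  simp only [hsolve, card_filter, Fintype.sum_prod_type_right, sum_mul, hfib, ite_mul, one_mul,
    zero_mul]

theorem card_filter_ne_zero_and_add_one {G : Type*} [Zero G] [Fintype G] [DecidableEq G]
    {P : G → Prop} [DecidablePred P] (h0 : P 0) : #{x | x ≠ 0 ∧ P x} + 1 = #{x | P x} := by
  rw [← card_erase_add_one (mem_filter.2 ⟨mem_univ _, h0⟩)]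
  congr 2
  ext x
  simp

theorem sum_compl_zero_sum_mul {ι K R : Type*} [CommRing K] [Fintype K] [DecidableEq K]
    [CommRing R] [IsDomain R] {ψ : AddChar K R} (hψ : ψ.IsPrimitive) (s : Finset ι) (f : ι → K) :
    ∑ z ∈ ({0}ᶜ : Finset K), ∑ i ∈ s, ψ (z * f i)
      = (Fintype.card K : R) * #{i ∈ s | f i = 0} - #s := by
  have hsum (x : K) : ∑ z ∈ ({0}ᶜ : Finset K), ψ (z * x)
      = (if x = 0 then (Fintype.card K : R) else 0) - 1 := by
    have h := AddChar.sum_mulShift x hψ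
    rw [← sum_add_sum_compl {0}, sum_singleton, zero_mul, AddChar.map_zero_eq_one] at h
    rw [eq_sub_iff_add_eq', h]
    split_ifs <;> simp only [Nat.cast_zero]
  rw [sum_comm, sum_congr rfl fun i _ => hsum (f i), sum_sub_distrib, ← sum_filter, sum_const,
    sum_const, nsmul_eq_mul, nsmul_eq_mul, mul_one, mul_comm]

end Counting

section NormOne

variable {K E F : Type*} [Field K] [Field E] [Field F] [Fintype F] [Algebra E F]

theorem card_filter_pow_natCard_sub_one_eq [Fintype E] [DecidableEq E] [DecidableEq F]
    {u : F} (hu : u ≠ 0) (P : F → Prop) [DecidablePred P] :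
    #{y : F | y ≠ 0 ∧ y ^ (Nat.card E - 1) = u ^ (Nat.card E - 1) ∧ P y}
      = #{s : E | s ≠ 0 ∧ P (s • u)} := by
  symm
  refine card_bij (fun s _ => s • u) (fun s hs => ?_)
    (fun s _ s' _ h => smul_left_injective E hu h) (fun y hy => ?_)
  · simp only [mem_filter, mem_univ, true_and] at hs ⊢
    have hsu : s • u ≠ 0 := smul_ne_zero hs.1 hu
    exact ⟨hsu, (pow_natCard_sub_one_eq_iff_exists_smul hu hsu).2 ⟨s, rfl⟩, hs.2⟩
  · simp only [mem_filter, mem_univ, true_and] at hy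
    obtain ⟨hy0, hpow, hP⟩ := hy
    obtain ⟨s, rfl⟩ := (pow_natCard_sub_one_eq_iff_exists_smul hu hy0).1 hpow
    exact ⟨s, by simpa using ⟨left_ne_zero_of_smul hy0, hP⟩, rfl⟩

theorem card_filter_ne_zero_eq_sum_norm_eq_one [DecidableEq E] [DecidableEq F] (P : F → Prop)
    [DecidablePred P] :
    #{y : F | y ≠ 0 ∧ P y} = ∑ x : F with Algebra.norm E x = 1,
      #{y : F | y ≠ 0 ∧ y ^ (Nat.card E - 1) = x ∧ P y} := by
  rw [card_eq_sum_card_fiberwise (f := fun y => y ^ (Nat.card E - 1))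
    (t := {x : F | Algebra.norm E x = 1})]
  · simp only [filter_filter, and_assoc, and_comm (a := P _)]
  · intro y hy
    simp only [coe_filter, mem_univ, true_and, Set.mem_ofPred_eq] at hy ⊢
    exact (norm_eq_one_iff_exists_pow_natCard_sub_one _).2 ⟨y, hy.1, rfl⟩

theorem card_norm_eq_one_mul [DecidableEq E] :
    #{x : F | Algebra.norm E x = 1} * (Nat.card E - 1) = Fintype.card F - 1 := by
  classical
  have : Finite E := Finite.of_injective _ (algebraMap E F).injective
  have := Fintype.ofFinite E
  have hfib : ∀ x ∈ ({x : F | Algebra.norm E x = 1} : Finset F),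
      #{y : F | y ≠ 0 ∧ y ^ (Nat.card E - 1) = x ∧ True} = Nat.card E - 1 := by
    intro x hx
    obtain ⟨u, hu, rfl⟩ := (norm_eq_one_iff_exists_pow_natCard_sub_one x).1 (mem_filter.1 hx).2
    rw [card_filter_pow_natCard_sub_one_eq hu]
    simp [filter_ne']
  have h := card_filter_ne_zero_eq_sum_norm_eq_one (E := E) (F := F) fun _ => True
  rw [sum_congr rfl hfib, sum_const, smul_eq_mul] at h
  rw [← h]
  simp [filter_ne']

theorem card_norm_eq_one_of_finrank_eq_two [DecidableEq E] (h2 : Module.finrank E F = 2) :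
    #{x : F | Algebra.norm E x = 1} = Nat.card E + 1 := by
  classical
  have : Finite E := Finite.of_injective _ (algebraMap E F).injective
  refine Nat.eq_of_mul_eq_mul_right (Nat.sub_pos_of_lt (Finite.one_lt_card (α := E))) ?_
  rw [card_norm_eq_one_mul, Fintype.card_eq_nat_card, Module.natCard_eq_pow_finrank (K := E), h2,
    ← Nat.sq_sub_sq, one_pow]

variable [DecidableEq K] [Algebra K E]

theorem card_trace_mul_eq [Fintype K] [Fintype E] [DecidableEq E] {r : ℕ}
    (hr : r * Fintype.card K = Fintype.card E) (τ : E) (c : K) :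
    #{s : E | Algebra.trace K E (s * τ) = c}
      = if τ = 0 then (if c = 0 then Fintype.card E else 0) else r := by
  split_ifs with hτ hc
  · simp [hτ, hc]
  · simp [hτ, Ne.symm hc]
  · have hsurj : Function.Surjective
        ((Algebra.trace K E).toAddMonoidHom.comp (AddMonoidHom.mulRight τ)) :=
      (Algebra.trace_surjective K E).comp fun x => ⟨x / τ, div_mul_cancel₀ x hτ⟩
    exact Nat.eq_of_mul_eq_mul_right Fintype.card_pos
      ((card_fiber_mul_card_of_surjective hsurj c).trans hr.symm)

variable [DecidableEq F] [Algebra K F] [IsScalarTower K E F]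

theorem card_pow_eq_and_trace_mul_eq_add [Fintype E] {u : F} (hu : u ≠ 0) (b : F) (c : K) :
    #{y : F | y ≠ 0 ∧ y ^ (Nat.card E - 1) = u ^ (Nat.card E - 1) ∧ Algebra.trace K F (b * y) = c}
        + (if c = 0 then 1 else 0)
      = #{s : E | Algebra.trace K E (s * Algebra.trace E F (b * u)) = c} := by
  classical
  set B : Finset E := {s | Algebra.trace K E (s * Algebra.trace E F (b * u)) = c} with hB
  have hzero : 0 ∈ B ↔ c = 0 := by simp [hB, eq_comm]
  have herase : ({s : E | s ≠ 0 ∧ Algebra.trace K F (b * s • u) = c} : Finset E) = B.erase 0 := by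
    ext s
    simp [hB, trace_smul_eq_trace_mul_trace]
  rw [card_filter_pow_natCard_sub_one_eq hu, herase]
  split_ifs with hc
  · exact card_erase_add_one (hzero.2 hc)
  · rw [erase_eq_of_notMem (mt hzero.1 hc), add_zero]

variable [Fintype K] {r : ℕ} {b v : F}

theorem card_pow_eq_and_trace_mul_eq_add_eq_ite (h2 : Module.finrank E F = 2)
    (hr : r * Fintype.card K = Nat.card E) (hb : b ≠ 0) (hv : v ≠ 0)
    (hbv : Algebra.trace E F (b * v) = 0) {u : F} (hu : u ≠ 0) (c : K) :
    #{y : F | y ≠ 0 ∧ y ^ (Nat.card E - 1) = u ^ (Nat.card E - 1) ∧ Algebra.trace K F (b * y) = c}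
        + (if c = 0 then 1 else 0)
      = if u ^ (Nat.card E - 1) = v ^ (Nat.card E - 1) then (if c = 0 then Nat.card E else 0)
        else r := by
  classical
  have : Finite E := Finite.of_injective _ (algebraMap E F).injective
  have := Fintype.ofFinite E
  rw [card_pow_eq_and_trace_mul_eq_add hu,
    card_trace_mul_eq (hr.trans Fintype.card_eq_nat_card.symm), Fintype.card_eq_nat_card]
  exact if_congr (trace_mul_eq_zero_iff_pow_eq h2 hb hu hv hbv) rfl rfl

theorem card_trace_mul_eq_comp_pow_add_card (h2 : Module.finrank E F = 2)
    (hr : r * Fintype.card K = Nat.card E) (hb : b ≠ 0) (hv : v ≠ 0)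
    (hbv : Algebra.trace E F (b * v) = 0) {c : F → K} (hc : c 0 = 0) :
    #{y : F | Algebra.trace K F (b * y) = c (y ^ (Nat.card E - 1))}
        + #{x : F | x ^ (Nat.card E + 1) = 1 ∧ c x = 0}
      = Nat.card E * r + 1 + if c (v ^ (Nat.card E - 1)) = 0 then Nat.card E else 0 := by
  classical
  have : Finite E := Finite.of_injective _ (algebraMap E F).injective
  set Δ : Finset F := {x | Algebra.norm E x = 1} with hΔ
  set x₀ := v ^ (Nat.card E - 1) with hx₀
  have hx₀Δ : x₀ ∈ Δ :=
    mem_filter.2 ⟨mem_univ _, (norm_eq_one_iff_exists_pow_natCard_sub_one x₀).2 ⟨v, hv, rfl⟩⟩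
  have hfibre : ∀ x ∈ Δ,
      #{y : F | y ≠ 0 ∧ y ^ (Nat.card E - 1) = x ∧
          Algebra.trace K F (b * y) = c (y ^ (Nat.card E - 1))} + (if c x = 0 then 1 else 0)
        = if x = x₀ then (if c x = 0 then Nat.card E else 0) else r := by
    intro x hx
    obtain ⟨u, hu, rfl⟩ := (norm_eq_one_iff_exists_pow_natCard_sub_one x).1 (mem_filter.1 hx).2
    rw [hx₀, ← card_pow_eq_and_trace_mul_eq_add_eq_ite h2 hr hb hv hbv hu]
    congr 2
    exact filter_congr fun y _ => and_congr_right fun _ => and_congr_right fun h => by rw [h]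
  have hpos : Nat.card E - 1 ≠ 0 := (Nat.sub_pos_of_lt Finite.one_lt_card).ne'
  have hzero : #{y : F | y ≠ 0 ∧ Algebra.trace K F (b * y) = c (y ^ (Nat.card E - 1))} + 1
      = #{y : F | Algebra.trace K F (b * y) = c (y ^ (Nat.card E - 1))} :=
    card_filter_ne_zero_and_add_one (by rw [mul_zero, map_zero, zero_pow hpos, hc])
  calc #{y : F | Algebra.trace K F (b * y) = c (y ^ (Nat.card E - 1))}
        + #{x : F | x ^ (Nat.card E + 1) = 1 ∧ c x = 0}
      = 1 + ∑ x ∈ Δ, (if x = x₀ then (if c x = 0 then Nat.card E else 0) else r) := by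
        rw [← sum_congr rfl hfibre, sum_add_distrib, hΔ, ← card_filter, filter_filter,
          ← hzero, card_filter_ne_zero_eq_sum_norm_eq_one (E := E)]
        simp only [norm_eq_one_iff_pow_natCard_add_one h2]
        ring
    _ = 1 + ((if c x₀ = 0 then Nat.card E else 0) + ∑ _x ∈ Δ.erase x₀, r) := by
        rw [← add_sum_erase _ _ hx₀Δ, if_pos rfl,
          sum_congr rfl fun x hx => if_neg (ne_of_mem_erase hx)]
    _ = Nat.card E * r + 1 + if c x₀ = 0 then Nat.card E else 0 := by
        rw [sum_const, card_erase_of_mem hx₀Δ, card_norm_eq_one_of_finrank_eq_two h2,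
          Nat.add_sub_cancel, smul_eq_mul]
        ring

end NormOne

section TracePairs

variable {K F : Type*} [Field K] [Fintype K] [DecidableEq K] [Field F] [Fintype F] [Algebra K F]

theorem ncard_trace_add_eq_zero_and_add_one {r s : ℕ}
    (hr : r * Fintype.card K = s) (hF : Fintype.card F = s ^ 2) {g : F → F} (hg : g 0 = 0) (a : K)
    (b : F) :
    Set.ncard {xy : F × F | xy ≠ 0 ∧ Algebra.trace K F (xy.1 + g xy.2) = 0 ∧
        Algebra.trace K F (algebraMap K F a * xy.1 + b * xy.2) = 0} + 1
      = #{y : F | Algebra.trace K F (b * y) = a * Algebra.trace K F (g y)} * (s * r) := by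
  classical
  have hpairs := card_filter_add_eq_zero_and (f := (Algebra.trace K F).toAddMonoidHom)
    (Algebra.trace_surjective K F) a (fun y => Algebra.trace K F (b * y))
    fun y => Algebra.trace K F (g y)
  simp only [← Algebra.smul_def, map_add, map_smul, smul_eq_mul]
  rw [Set.ncard_eq_toFinset_card', Set.toFinset_ofPred,
    card_filter_ne_zero_and_add_one (by simp [hg])]
  refine Nat.eq_of_mul_eq_mul_right (Fintype.card_pos (α := K)) (hpairs.trans ?_)
  rw [hF, mul_assoc, mul_assoc, hr, sq]

theorem sum_compl_zero_sum_addChar_trace_mul {E R : Type*} [Field E] [Algebra E F] [DecidableEq F]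
    [CommRing R] [IsDomain R] (h2 : Module.finrank E F = 2) {ψ : AddChar K R}
    (hψ : ψ.IsPrimitive) :
    ∑ z ∈ ({0}ᶜ : Finset K), ∑ x : F with x ^ (Nat.card E + 1) = 1,
        ψ (Algebra.trace K F (algebraMap K F z * x))
      = Fintype.card K * #{x : F | x ^ (Nat.card E + 1) = 1 ∧ Algebra.trace K F x = 0}
        - (Nat.card E + 1) := by
  classical
  have hcard : #{x : F | x ^ (Nat.card E + 1) = 1} = Nat.card E + 1 := by
    simp only [← norm_eq_one_iff_pow_natCard_add_one h2, card_norm_eq_one_of_finrank_eq_two h2]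
  simp only [← Algebra.smul_def, map_smul, smul_eq_mul]
  rw [sum_compl_zero_sum_mul hψ, filter_filter, hcard, Nat.cast_add_one]

theorem stmt5_general {E R : Type*} [Field E] [DecidableEq F] [Algebra K E] [Algebra E F]
    [IsScalarTower K E F] [CommRing R] [IsDomain R] {q t m : ℕ} (hm : m = 2 * t)
    (hK : Fintype.card K = q) (hE : Nat.card E = q ^ t) (hF : Fintype.card F = q ^ m)
    {ψ : AddChar K R} (hψ : ψ.IsPrimitive) {a : K} (ha : a ≠ 0) {b v : F} (hb : b ≠ 0)
    (hv : v ≠ 0) (hbv : Algebra.trace E F (b * v) = 0) :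
    (Set.ncard {xy : F × F | xy ≠ (0, 0) ∧ Algebra.trace K F (xy.1 + xy.2 ^ (q ^ t - 1)) = 0 ∧
        Algebra.trace K F (algebraMap K F a * xy.1 + b * xy.2) = 0} : R)
      = q ^ (2 * m - 2) - 1 + q ^ (m - 2) * (q - 1)
        + q ^ (m + t - 2) * ((if Algebra.trace K F (v ^ (q ^ t - 1)) = 0 then (q : R) else 0) - 1)
        - q ^ (m - 2) * ∑ z ∈ ({0}ᶜ : Finset K), ∑ x : F with x ^ (q ^ t + 1) = 1,
          ψ (Algebra.trace K F (algebraMap K F z * x)) := by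
  have : Finite E := Finite.of_injective _ (algebraMap E F).injective
  have h1 : 1 < q ^ t := hE ▸ Finite.one_lt_card
  obtain ⟨k, rfl⟩ : ∃ k, t = k + 1 :=
    Nat.exists_eq_succ_of_ne_zero fun h => h1.ne' (by rw [h, pow_zero])
  have hr : q ^ k * Fintype.card K = q ^ (k + 1) := by rw [hK, pow_succ]
  have hFE : Fintype.card F = (q ^ (k + 1)) ^ 2 := by rw [hF, hm, ← pow_mul, mul_comm]
  have h2 : Module.finrank E F = 2 :=
    finrank_eq_of_natCard_eq_pow (by rw [Nat.card_eq_fintype_card, hFE, hE])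
  have hpairs := ncard_trace_add_eq_zero_and_add_one hr hFE
    (g := fun y => y ^ (q ^ (k + 1) - 1)) (zero_pow (Nat.sub_pos_of_lt h1).ne') a b
  have hcount := card_trace_mul_eq_comp_pow_add_card (K := K) h2 (hr.trans hE.symm) hb hv hbv
    (c := fun x => a * Algebra.trace K F x) (by rw [map_zero, mul_zero])
  have hS := sum_compl_zero_sum_addChar_trace_mul h2 hψ
  simp only [hE, hK, mul_eq_zero, ha, false_or] at hcount hS
  have hpairsR := congrArg (Nat.cast (R := R)) hpairs
  have hcountR := congrArg (Nat.cast (R := R)) hcount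
  push_cast at hpairsR hcountR hS
  rw [hS, ← Prod.zero_eq_mk, eq_sub_of_add_eq hpairsR, eq_sub_of_add_eq hcountR, hm,
    show 2 * (2 * (k + 1)) - 2 = 4 * k + 2 by lia, show 2 * (k + 1) - 2 = 2 * k by lia,
    show 2 * (k + 1) + (k + 1) - 2 = 3 * k + 1 by lia]
  split_ifs <;> ring

end TracePairs

theorem exp_pow_val_eq_stdAddChar (N : ℕ) [NeZero N] (x : ZMod N) :
    Complex.exp (2 * Real.pi * Complex.I / N) ^ x.val = ZMod.stdAddChar x := by
  have h := ZMod.stdAddChar_coe (N := N) x.val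
  rw [Int.cast_natCast, ZMod.natCast_zmod_val, Int.cast_natCast] at h
  rw [h, ← Complex.exp_nat_mul]
  ring_nf

/-- For `a` a nonzero element of the prime subfield, `b ∈ F_q^*`, and
`v ∈ Γ` with `Tr_{q/t}(bv) = 0`: if `Tr(v^{p^t-1}) = 0` then
`N(a,b) = p^{2m-2} - 1 + (p^{m-2} + p^{m+t-2})(p-1) - p^{m-2}·S`. -/
theorem stmt5 (p t m : ℕ) [Fact p.Prime] (ht : 2 < t) (hm : m = 2 * t)
    (F : Type) [Field F] [Fintype F] [DecidableEq F] [Algebra (ZMod p) F]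
    (hF : Fintype.card F = p ^ m)
    (E : Subfield F) (hE : Nat.card E = p ^ t)
    (α : Fˣ) (hα : ∀ x : Fˣ, x ∈ Subgroup.zpowers α)
    (Γ : Set F) (hΓ : Γ = {v : F | ∃ j ≤ p ^ t, v = (α : F) ^ j})
    (ζ : ℂ) (hζ : ζ = Complex.exp (2 * Real.pi * Complex.I / p))
    (χ : F → ℂ) (hχ : ∀ x, χ x = ζ ^ (Algebra.trace (ZMod p) F x).val)
    (Δ : Finset F) (hΔ : Δ = univ.filter (fun x : F => x ^ (p ^ t + 1) = 1))
    (S : ℂ) (hS : S = ∑ z ∈ ({0}ᶜ : Finset (ZMod p)), ∑ x ∈ Δ, χ (algebraMap (ZMod p) F z * x))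
    (N : F → F → ℕ)
    (hN : ∀ a b : F, N a b = Set.ncard {xy : F × F | xy ≠ (0, 0) ∧
      Algebra.trace (ZMod p) F (xy.1 + xy.2 ^ (p ^ t - 1)) = 0 ∧
      Algebra.trace (ZMod p) F (a * xy.1 + b * xy.2) = 0})
    (z : ZMod p) (hz : z ≠ 0) (a : F) (ha : a = algebraMap (ZMod p) F z)
    (b : F) (hb : b ≠ 0)
    (v : F) (hv : v ∈ Γ) (hbv : Algebra.trace E F (b * v) = 0)
    (htr : Algebra.trace (ZMod p) F (v ^ (p ^ t - 1)) = 0) :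
    (N a b : ℂ) = (p : ℂ) ^ (2 * m - 2) - 1
      + ((p : ℂ) ^ (m - 2) + (p : ℂ) ^ (m + t - 2)) * (p - 1)
      - (p : ℂ) ^ (m - 2) * S := by
  obtain ⟨j, -, rfl⟩ : ∃ j ≤ p ^ t, v = (α : F) ^ j := by rwa [hΓ] at hv
  have : CharP F p := charP_of_injective_algebraMap (algebraMap (ZMod p) F).injective p
  have : CharP E p := E.subtype.charP E.subtype.injective p
  let : Algebra (ZMod p) E := ZMod.algebra E p
  -- Stated without a type, since `IsScalarTower (ZMod p) E F` would elaborate with the action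
  -- `AddSubgroupClass.instZModSMul` on `E` instead of the one from the algebra structure.
  have := IsScalarTower.of_algebraMap_eq' (R := ZMod p) (S := E) (A := F) (Subsingleton.elim _ _)
  have hχ' (x : F) : χ x = ZMod.stdAddChar (Algebra.trace (ZMod p) F x) := by
    rw [hχ, hζ, exp_pow_val_eq_stdAddChar]
  rw [hN, ha, stmt5_general hm (ZMod.card p) hE hF (ZMod.isPrimitive_stdAddChar p) hz hb
    (pow_ne_zero j α.ne_zero) hbv, if_pos htr, hS, hΔ]
  simp only [hχ', add_mul, add_assoc]
end

section
/- The number of pairs (a,b) ∈ (F_q × F_q) \ {(0,0)} whose codeword has Hamming weight wt(a,b) = p^{2m−2}(p−1) is exactly p^m(p^m − p + 1) − 1. -/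
/-!
Let `F / K` be an extension of finite fields of degree `m = 2 * t`, `q = |K|` and `Q = q ^ t`. For
`a ∉ K` the forms `Tr x` and `Tr (a * x)` are linearly independent, so all these codewords have the
required weight. For `a = k ∈ K` the weight is the required one iff
`N = #{y | Tr (b * y) = k * Tr (y ^ (Q - 1))}` equals `q ^ (m - 1)`; this holds for `k = 0 ≠ b`, and
the point is that it fails for `k ≠ 0`.

The nonzero `y` are partitioned by `w = y ^ (Q - 1)`, an element of the group `U` of `(Q + 1)`-th
roots of unity, and each class together with `0` is a `K`-space with `Q` elements. On it a linear
form takes any two values equally often modulo `Q`. Hence `N` is, up to a multiple of `Q`,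
`1 - #{w ∈ U | Tr w = 0}`, and `N = q ^ (m - 1)` would leave `1` and `Q + 1` as the only possible
numbers of zeros of `Tr` on `U`. The value `Q + 1` is excluded by orthogonality of the powers of
`w`. The value `1` is excluded for odd `q` by the symmetry `w ↦ -w`. For `q = 2 ^ s`, it would mean
that `1` is the only zero, so `Tr w ^ (q - 1) = 1` for all other `w`; but `Tr w ^ (q - 1)` is a sum
of `(2 * t) ^ s < Q` powers of `w`, and orthogonality forces `(2 * t) ^ s = 1` in characteristic
`2`.
-/

open Finset Polynomial

section LinearForms

lemma surjective_pi_of_linearIndependent {K V ι : Type*} [Field K] [AddCommGroup V]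
    [Module K V] [Finite ι] {φ : ι → V →ₗ[K] K}
    (hφ : LinearIndependent K φ) : Function.Surjective (LinearMap.pi φ) := by
  have hcoe : LinearIndependent K fun i => ⇑(φ i) :=
    hφ.map' (LinearMap.ltoFun K V K K) (LinearMap.ker_eq_bot.2 DFunLike.coe_injective)
  rw [← LinearMap.range_eq_top, ← top_le_iff, ← span_flip_eq_top_iff_linearIndependent.2 hcoe,
    Submodule.span_le]
  rintro _ ⟨x, rfl⟩
  exact ⟨x, rfl⟩

lemma card_linearForm_eq_modEq {K V : Type*} [Field K] [DecidableEq K] [AddCommGroup V]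
    [Module K V] [Fintype V] (L : Submodule K V) [DecidablePred (· ∈ L)] (φ : V →ₗ[K] K) (c : K) :
    #{x | x ∈ L ∧ φ x = c} ≡ #{x | x ∈ L ∧ φ x = 0} [MOD Nat.card L] := by
  by_cases hc : ∃ z ∈ L, φ z = c
  · obtain ⟨z, hzL, rfl⟩ := hc
    have : #{x | x ∈ L ∧ φ x = φ z} = #{x | x ∈ L ∧ φ x = 0} :=
      card_equiv (Equiv.subRight z) fun x => by simp [L.sub_mem_iff_left hzL, sub_eq_zero]
    rw [this]
  · have hφL : ∀ x ∈ L, φ x = 0 := fun x hx => by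
      by_contra hne
      exact hc ⟨(c / φ x) • x, L.smul_mem _ hx, by simp [hne]⟩
    have hzero : #{x | x ∈ L ∧ φ x = 0} = Nat.card L := by
      rw [Nat.card_eq_fintype_card]
      exact (Fintype.card_of_subtype _ (by simpa using hφL)).symm
    have hempty : #{x | x ∈ L ∧ φ x = c} = 0 := by
      simpa [filter_eq_empty_iff] using fun x hx hxc => hc ⟨x, hx, hxc⟩
    rw [hzero, hempty]
    exact (Nat.modEq_zero_iff_dvd.2 dvd_rfl).symm

variable {K V : Type*} [Field K] [Fintype K] [DecidableEq K] [AddCommGroup V] [Module K V]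
  [Fintype V]

lemma card_forall_linearForm_eq {ι : Type*} [Fintype ι] {φ : ι → V →ₗ[K] K}
    (hφ : LinearIndependent K φ) (c : ι → K) :
    #{x | ∀ i, φ i x = c i} = Fintype.card K ^ (Module.finrank K V - Fintype.card ι) := by
  classical
  have hsurj := surjective_pi_of_linearIndependent hφ
  have hker : Module.finrank K (LinearMap.pi φ).ker = Module.finrank K V - Fintype.card ι := by
    have h := (LinearMap.pi φ).finrank_range_add_finrank_ker
    rw [LinearMap.range_eq_top.2 hsurj, finrank_top, Module.finrank_fintype_fun_eq_card] at h
    omega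
  calc #{x | ∀ i, φ i x = c i}
      = #{x | LinearMap.pi φ x = c} := by simp only [funext_iff, LinearMap.pi_apply]
    _ = #{x | LinearMap.pi φ x = 0} :=
      AddMonoidHom.card_fiber_eq_of_mem_range (LinearMap.pi φ) (hsurj c) (hsurj 0)
    _ = Fintype.card (LinearMap.pi φ).ker := (Fintype.card_of_subtype _ (by simp)).symm
    _ = _ := by rw [Module.card_eq_pow_finrank (K := K), hker]

end LinearForms

section RootsOfUnity

variable {R : Type*} [CommRing R] [IsDomain R] {n : ℕ} {ζ : R}

lemma sum_nthRootsFinset_pow (hζ : IsPrimitiveRoot ζ n) (hn : 0 < n) (j : ℕ) :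
    ∑ w ∈ nthRootsFinset n (1 : R), w ^ j = if n ∣ j then (n : R) else 0 := by
  split_ifs with hj
  · have hone : ∀ w ∈ nthRootsFinset n (1 : R), w ^ j = 1 := fun w hw => by
      obtain ⟨d, rfl⟩ := hj
      rw [pow_mul, (mem_nthRootsFinset hn 1).1 hw, one_pow]
    rw [sum_congr rfl hone, sum_const, hζ.card_nthRootsFinset, nsmul_one]
  · have hζn : ζ * ζ ^ (n - 1) = 1 := by rw [mul_pow_sub_one hn.ne', hζ.pow_eq_one]
    have hinv : ∑ w ∈ nthRootsFinset n (1 : R), w ^ j =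
        ζ ^ j * ∑ w ∈ nthRootsFinset n (1 : R), w ^ j := by
      rw [mul_sum]
      refine sum_nbij' (ζ ^ (n - 1) * ·) (ζ * ·) (fun w hw => ?_) (fun w hw => ?_) (fun w _ => ?_)
        (fun w _ => ?_) (fun w _ => ?_)
      · rw [mem_nthRootsFinset hn] at hw ⊢
        rw [mul_pow, hw, ← pow_mul, mul_comm (n - 1), pow_mul, hζ.pow_eq_one, one_pow, one_mul]
      · simpa using mul_mem_nthRootsFinset (hζ.mem_nthRootsFinset hn) hw
      · rw [← mul_assoc, hζn, one_mul]
      · rw [mul_left_comm, ← mul_assoc, hζn, one_mul]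
      · rw [← mul_pow, ← mul_assoc, hζn, one_mul]
    have hne : ζ ^ j ≠ 1 := fun h => hj (hζ.dvd_of_pow_eq_one j h)
    have : (ζ ^ j - 1) * ∑ w ∈ nthRootsFinset n (1 : R), w ^ j = 0 := by
      rw [sub_mul, one_mul, ← hinv, sub_self]
    exact (mul_eq_zero.1 this).resolve_left (sub_ne_zero.2 hne)

lemma natCast_card_eq_of_sum_pow_eq {ι : Type*} [Fintype ι] (hζ : IsPrimitiveRoot ζ n)
    (hι : Fintype.card ι + 1 < n) (e : ι → ℕ) (c : R)
    (hc : ∀ w ∈ nthRootsFinset n (1 : R), w ≠ 1 → ∑ i, w ^ e i = c) :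
    (Fintype.card ι : R) = c := by
  classical
  have hn : 0 < n := by omega
  have : NeZero n := ⟨hn.ne'⟩
  -- Summed against `w ^ a`, every power of `w` in the hypothesis has sum `0` over the `n`-th roots
  -- of unity, so only the term at `w = 1` survives.
  obtain ⟨a, ha0, hae⟩ : ∃ a : ZMod n, a ≠ 0 ∧ ∀ i, a + e i ≠ 0 := by
    have hcard : #(insert 0 (univ.image fun i => -(e i : ZMod n))) < #(univ : Finset (ZMod n)) := by
      rw [card_univ, ZMod.card]
      exact ((card_insert_le _ _).trans (Nat.add_le_add_right card_image_le 1)).trans_lt hι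
    obtain ⟨a, -, ha⟩ := exists_mem_notMem_of_card_lt_card hcard
    simp only [mem_insert, mem_image, mem_univ, true_and, not_or, not_exists] at ha
    exact ⟨a, ha.1, fun i h => ha.2 i (eq_neg_of_add_eq_zero_left h).symm⟩
  have hsum : ∀ d : ℕ, a + d ≠ 0 → ∑ w ∈ nthRootsFinset n (1 : R), w ^ (a.val + d) = 0 := by
    intro d hd
    rw [sum_nthRootsFinset_pow hζ hn, if_neg]
    rw [← ZMod.natCast_eq_zero_iff]
    simpa using hd
  have hzero : ∑ w ∈ nthRootsFinset n (1 : R), w ^ a.val * ((∑ i, w ^ e i) - c) = 0 := by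
    simp only [mul_sub, mul_sum, sum_sub_distrib, ← sum_mul, ← pow_add]
    rw [sum_comm, sum_eq_zero fun i _ => hsum _ (hae i), ← add_zero a.val,
      hsum 0 (by simpa using ha0), zero_mul, sub_zero]
  rw [sum_eq_single_of_mem 1 (one_mem_nthRootsFinset hn) fun w hw hw1 => by
    rw [hc w hw hw1, sub_self, mul_zero]] at hzero
  simpa [sub_eq_zero] using hzero

end RootsOfUnity

lemma sum_pow_two_pow_sub_one {R : Type*} [CommRing R] [CharP R 2] {ι : Type*} [Fintype ι]
    (f : ι → R) (s : ℕ) :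
    (∑ i, f i) ^ (2 ^ s - 1) = ∑ σ : Fin s → ι, ∏ a : Fin s, f (σ a) ^ 2 ^ (a : ℕ) := by
  classical
  have hs : 2 ^ s - 1 = ∑ a : Fin s, 2 ^ (a : ℕ) := by
    rw [Fin.sum_univ_eq_sum_range (2 ^ ·), Nat.geomSum_eq le_rfl, Nat.div_one]
  rw [hs, ← prod_pow_eq_pow_sum]
  simp only [sum_pow_char_pow 2]
  rw [prod_univ_sum, Fintype.piFinset_univ]

lemma exists_isPrimitiveRoot_of_dvd {F : Type*} [Field F] [Finite F] {n : ℕ}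
    (hn : n ∣ Nat.card F - 1) : ∃ ζ : F, IsPrimitiveRoot ζ n := by
  obtain ⟨d, hd⟩ := hn
  obtain ⟨g, hg⟩ := IsCyclic.exists_ofOrder_eq_natCard (α := Fˣ)
  rw [Nat.card_units] at hg
  have hprim := IsPrimitiveRoot.coe_units_iff.2 (IsPrimitiveRoot.orderOf g)
  rw [hg] at hprim
  exact ⟨_, hprim.pow (Nat.sub_pos_of_lt Finite.one_lt_card) (hd.trans (mul_comm n d))⟩

section Trace

variable {K F : Type*} [Field K] [Fintype K] [DecidableEq K] [Field F] [Fintype F] [Algebra K F]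

local notation "Tr" => Algebra.trace K F

lemma card_forall_trace_mul_eq {ι : Type*} [Fintype ι] {v : ι → F} (hv : LinearIndependent K v)
    (c : ι → K) :
    #{x : F | ∀ i, Tr (v i * x) = c i} =
      Fintype.card K ^ (Module.finrank K F - Fintype.card ι) :=
  card_forall_linearForm_eq
    (hv.map' (Algebra.traceForm K F) (traceForm_nondegenerate K F).ker_eq_bot) c

lemma card_trace_mul_eq_s10 {b : F} (hb : b ≠ 0) (c : K) :
    #{y : F | Tr (b * y) = c} = Fintype.card K ^ (Module.finrank K F - 1) := by
  simpa using card_forall_trace_mul_eq (v := fun _ : Unit => b)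
    (linearIndependent_unique_iff.2 hb) fun _ => c

lemma card_trace_eq (c : K) :
    #{y : F | Tr y = c} = Fintype.card K ^ (Module.finrank K F - 1) := by
  simpa using card_trace_mul_eq_s10 (F := F) one_ne_zero c

lemma card_trace_eq_and_trace_mul_eq {a : F} (ha : a ∉ Set.range (algebraMap K F)) (c d : K) :
    #{x : F | Tr x = c ∧ Tr (a * x) = d} = Fintype.card K ^ (Module.finrank K F - 2) := by
  have hli : LinearIndependent K ![1, a] :=
    (LinearIndependent.pair_iff' one_ne_zero).2 fun k hk =>
      ha ⟨k, by rw [Algebra.algebraMap_eq_smul_one, hk]⟩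
  simpa [Fin.forall_fin_two] using card_forall_trace_mul_eq hli ![c, d]

end Trace

section Codewords

variable {K F : Type*} [Field K] [Fintype K] [DecidableEq K] [Field F] [Fintype F]
  [Algebra K F] (f : F → F)

local notation "Tr" => Algebra.trace K F
local notation "q" => Fintype.card K
local notation "m" => Module.finrank K F

variable (K) in
/-- The Hamming weight of the codeword attached to `(a, b)` in the trace code with defining set
`D = {(x, y) ≠ (0, 0) | Tr (x + f y) = 0}`. -/
noncomputable def codewordWeight (a b : F) : ℕ :=
  Set.ncard {xy : F × F | xy ≠ (0, 0) ∧ Tr (xy.1 + f xy.2) = 0 ∧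
    Tr (a * xy.1 + b * xy.2) ≠ 0}

lemma codewordWeight_add_card_zeros (a b : F) :
    codewordWeight K f a b +
        #{xy : F × F | Tr (xy.1 + f xy.2) = 0 ∧ Tr (a * xy.1 + b * xy.2) = 0} =
      q ^ (m + (m - 1)) := by
  have hweight : codewordWeight K f a b =
      #{xy : F × F | Tr (xy.1 + f xy.2) = 0 ∧ Tr (a * xy.1 + b * xy.2) ≠ 0} := by
    rw [codewordWeight, ← Set.ncard_coe_finset]
    congr 1
    ext xy
    simp only [Set.mem_ofPred_eq, coe_filter, mem_univ, true_and, and_iff_right_iff_imp, and_imp]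
    rintro - hne rfl
    simp at hne
  have htotal : #{xy : F × F | Tr (xy.1 + f xy.2) = 0} = q ^ (m + (m - 1)) := by
    simp only [card_filter, Fintype.sum_prod_type_right]
    simp only [← card_filter, map_add, add_eq_zero_iff_eq_neg, card_trace_eq, sum_const, card_univ,
      smul_eq_mul, pow_add, Module.card_eq_pow_finrank (K := K) (V := F)]
  rw [hweight, ← htotal, add_comm, ← filter_filter, ← filter_filter,
    card_filter_add_card_filter_not]

lemma card_zeros_of_notMem_range {a : F} (ha : a ∉ Set.range (algebraMap K F)) (b : F) :
    #{xy : F × F | Tr (xy.1 + f xy.2) = 0 ∧ Tr (a * xy.1 + b * xy.2) = 0} =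
      q ^ (m + (m - 2)) := by
  simp only [card_filter, Fintype.sum_prod_type_right]
  simp only [← card_filter, map_add, add_eq_zero_iff_eq_neg, card_trace_eq_and_trace_mul_eq ha,
    sum_const, card_univ, smul_eq_mul, pow_add, Module.card_eq_pow_finrank (K := K) (V := F)]

lemma card_zeros_algebraMap (k : K) (b : F) :
    #{xy : F × F | Tr (xy.1 + f xy.2) = 0 ∧ Tr (algebraMap K F k * xy.1 + b * xy.2) = 0} =
      q ^ (m - 1) * #{y : F | Tr (b * y) = k * Tr (f y)} := by
  have hsplit : ∀ x y : F, (Tr (x + f y) = 0 ∧ Tr (algebraMap K F k * x + b * y) = 0) ↔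
      (Tr (b * y) = k * Tr (f y) ∧ Tr x = -Tr (f y)) := fun x y => by
    rw [map_add, map_add, ← Algebra.smul_def, map_smul, smul_eq_mul, add_eq_zero_iff_eq_neg,
      and_comm, and_congr_left_iff]
    intro hx
    rw [hx, mul_neg, neg_add_eq_zero, eq_comm]
  simp only [card_filter, Fintype.sum_prod_type_right, hsplit, ite_and]
  rw [mul_sum]
  refine sum_congr rfl fun y _ => ?_
  split_ifs
  · rw [← card_filter, card_trace_eq, mul_one]
  · simp

lemma codewordWeight_eq_iff (a b : F) :
    codewordWeight K f a b = q ^ (2 * m - 2) * (q - 1) ↔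
      #{xy : F × F | Tr (xy.1 + f xy.2) = 0 ∧ Tr (a * xy.1 + b * xy.2) = 0} =
        q ^ (2 * m - 2) := by
  have htotal : q ^ (m + (m - 1)) = q ^ (2 * m - 2) * (q - 1) + q ^ (2 * m - 2) := by
    have hm : 0 < m := Module.finrank_pos
    have hq : 0 < q := Fintype.card_pos
    rw [show m + (m - 1) = 2 * m - 2 + 1 by omega, pow_succ, ← Nat.mul_add_one,
      Nat.sub_add_cancel hq]
  have hadd := codewordWeight_add_card_zeros (K := K) f a b
  omega

lemma codewordWeight_algebraMap_eq_iff (k : K) (b : F) :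
    codewordWeight K f (algebraMap K F k) b = q ^ (2 * m - 2) * (q - 1) ↔
      #{y : F | Tr (b * y) = k * Tr (f y)} = q ^ (m - 1) := by
  rw [codewordWeight_eq_iff, card_zeros_algebraMap, show 2 * m - 2 = (m - 1) + (m - 1) by omega,
    pow_add, Nat.mul_right_inj (pow_ne_zero _ Fintype.card_ne_zero)]

lemma codewordWeight_eq_iff_notMem (hm : 2 ≤ m)
    (hf : ∀ k : K, k ≠ 0 → ∀ b : F, #{y : F | Tr (b * y) = k * Tr (f y)} ≠ q ^ (m - 1))
    {a b : F} (hab : (a, b) ≠ (0, 0)) :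
    codewordWeight K f a b = q ^ (2 * m - 2) * (q - 1) ↔ a ∉ algebraMap K F '' {0}ᶜ := by
  by_cases ha : a ∈ Set.range (algebraMap K F)
  · obtain ⟨k, rfl⟩ := ha
    rw [codewordWeight_algebraMap_eq_iff, (algebraMap K F).injective.mem_set_image,
      Set.mem_compl_singleton_iff, not_not]
    refine ⟨fun h => not_not.1 fun hk => hf k hk b h, ?_⟩
    rintro rfl
    have hb : b ≠ 0 := by
      rintro rfl
      exact hab (by rw [map_zero])
    simpa using card_trace_mul_eq_s10 hb (0 : K)
  · refine iff_of_true ?_ fun h => ha (Set.image_subset_range _ _ h)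
    rw [codewordWeight_eq_iff, card_zeros_of_notMem_range f ha]
    congr 1
    omega

lemma ncard_codewordWeight_eq (hm : 2 ≤ m)
    (hf : ∀ k : K, k ≠ 0 → ∀ b : F, #{y : F | Tr (b * y) = k * Tr (f y)} ≠ q ^ (m - 1)) :
    Set.ncard {ab : F × F | ab ≠ (0, 0) ∧
        codewordWeight K f ab.1 ab.2 = q ^ (2 * m - 2) * (q - 1)} =
      q ^ m * (q ^ m - q + 1) - 1 := by
  have hset : {ab : F × F | ab ≠ (0, 0) ∧
      codewordWeight K f ab.1 ab.2 = q ^ (2 * m - 2) * (q - 1)} =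
        ((algebraMap K F '' {0}ᶜ)ᶜ ×ˢ Set.univ) \ {(0, 0)} := by
    ext ⟨a, b⟩
    rw [Set.mem_ofPred_eq, and_congr_right (codewordWeight_eq_iff_notMem f hm hf), and_comm]
    simp only [Set.mem_sdiff, Set.mem_prod, Set.mem_compl_iff, Set.mem_univ, and_true,
      Set.mem_singleton_iff, ne_eq]
  have hzero : ((0, 0) : F × F) ∈ (algebraMap K F '' {0}ᶜ)ᶜ ×ˢ Set.univ := by simp
  have hq : 0 < q := Fintype.card_pos
  have hqm : q ≤ q ^ m := Nat.le_self_pow (by omega) q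
  rw [hset, Set.ncard_sdiff_singleton_of_mem hzero, Set.ncard_prod, Set.ncard_compl,
    Set.ncard_image_of_injective _ (algebraMap K F).injective, Set.ncard_compl,
    Set.ncard_singleton, Set.ncard_univ, Nat.card_eq_fintype_card, Nat.card_eq_fintype_card,
    Module.card_eq_pow_finrank (K := K) (V := F), mul_comm,
    show q ^ m - (q - 1) = q ^ m - q + 1 by omega]

end Codewords

section FrobeniusLine

variable (K : Type*) {F : Type*} [Field K] [Fintype K] [Field F] [Algebra K F]
  {t : ℕ} {w : F}

local notation "q" => Fintype.card K

/-- The `K`-subspace `{y | y ^ (q ^ t) = w * y}` of `F`, where `q` is the cardinality of `K`. When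
`[F : K] = 2 * t`, these subspaces for `w ^ (q ^ t + 1) = 1` partition the nonzero elements of `F`
according to the value of `y ^ (q ^ t - 1)`. -/
noncomputable def frobeniusLine (t : ℕ) (w : F) : Submodule K F :=
  LinearMap.ker ((FiniteField.frobeniusAlgHom K F ^ t).toLinearMap - LinearMap.mulLeft K w)

variable {K}

lemma frobeniusAlgHom_pow_apply (t : ℕ) (y : F) :
    (FiniteField.frobeniusAlgHom K F ^ t) y = y ^ q ^ t := by
  rw [AlgHom.coe_pow, FiniteField.coe_frobeniusAlgHom, pow_iterate]

lemma mem_frobeniusLine {y : F} : y ∈ frobeniusLine K t w ↔ y ^ q ^ t = w * y := by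
  rw [frobeniusLine, LinearMap.mem_ker, LinearMap.sub_apply, sub_eq_zero, AlgHom.toLinearMap_apply,
    frobeniusAlgHom_pow_apply, LinearMap.mulLeft_apply]

variable [Finite F]

lemma finrank_frobeniusLine_le (ht : t ≠ 0) (w : F) :
    Module.finrank K (frobeniusLine K t w) ≤ t := by
  classical
  have := Fintype.ofFinite F
  have hq : 1 < q := Fintype.one_lt_card
  have hdeg : (C w * X : F[X]).degree < (X ^ q ^ t : F[X]).degree := by
    rw [degree_X_pow]
    exact (degree_C_mul_X_le w).trans_lt (by exact_mod_cast Nat.one_lt_pow ht hq)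
  have hne : (X ^ q ^ t - C w * X : F[X]) ≠ 0 :=
    sub_ne_zero.2 fun h => hdeg.ne' (congrArg degree h)
  have hcard : Fintype.card (frobeniusLine K t w) ≤ q ^ t := by
    rw [Fintype.card_of_subtype {y | y ^ q ^ t = w * y} fun y => by simp [mem_frobeniusLine]]
    refine (card_le_degree_of_subset_roots (p := X ^ q ^ t - C w * X) fun y hy => ?_).trans_eq ?_
    · simpa [mem_roots hne, sub_eq_zero] using hy
    · rw [natDegree_eq_of_degree_eq (degree_sub_eq_left_of_degree_lt hdeg), natDegree_X_pow]
  rwa [Module.card_eq_pow_finrank (K := K), Nat.pow_le_pow_iff_right hq] at hcard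

lemma finrank_frobeniusLine (ht : t ≠ 0) (hF : Module.finrank K F = 2 * t)
    (hw : w ^ (q ^ t + 1) = 1) : Module.finrank K (frobeniusLine K t w) = t := by
  have hw0 : w ≠ 0 := by
    rintro rfl
    simp at hw
  have hrange : ((FiniteField.frobeniusAlgHom K F ^ t).toLinearMap -
      LinearMap.mulLeft K w).range ≤ frobeniusLine K t (-w⁻¹) := by
    rintro _ ⟨y, rfl⟩
    have hy : (y ^ q ^ t) ^ q ^ t = y := by
      have := Fintype.ofFinite F
      rw [← pow_mul, ← pow_add, ← two_mul, ← hF, ← Module.card_eq_pow_finrank,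
        FiniteField.pow_card]
    rw [mem_frobeniusLine, LinearMap.sub_apply, AlgHom.toLinearMap_apply, LinearMap.mulLeft_apply,
      ← frobeniusAlgHom_pow_apply, map_sub, map_mul]
    simp only [frobeniusAlgHom_pow_apply, hy]
    rw [eq_inv_of_mul_eq_one_left ((pow_succ w _).symm.trans hw)]
    field_simp
    ring
  -- The kernel and the range have dimension at most `t`, and their dimensions add up to `2 * t`.
  have hsum := LinearMap.finrank_range_add_finrank_ker
    ((FiniteField.frobeniusAlgHom K F ^ t).toLinearMap - LinearMap.mulLeft K w)
  have hle := (Submodule.finrank_mono hrange).trans (finrank_frobeniusLine_le ht _)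
  have hle' := finrank_frobeniusLine_le (K := K) ht w
  rw [frobeniusLine] at hle' ⊢
  omega

lemma sum_card_filter_pow_eq_mul {F : Type*} [Field F] [Fintype F] [DecidableEq F] {Q : ℕ}
    (hQ : 1 < Q) (hF : Fintype.card F = Q ^ 2) (P : F → F → Prop) [∀ w, DecidablePred (P w)]
    (hP : P 0 0) :
    ∑ w ∈ nthRootsFinset (Q + 1) (1 : F), #{y | y ^ Q = w * y ∧ P w y} + 1 =
      #{w ∈ nthRootsFinset (Q + 1) (1 : F) | P w 0} + #{y | P (y ^ (Q - 1)) y} := by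
  set S : Finset F := {y | P (y ^ (Q - 1)) y} with hS
  have hpow : ∀ y : F, y ^ (Q - 1) * y = y ^ Q := fun y => pow_sub_one_mul (by omega) y
  have hzero : (0 : F) ∈ S := by simpa [hS, zero_pow (Nat.sub_ne_zero_of_lt hQ)] using hP
  have hmaps : Set.MapsTo (· ^ (Q - 1)) (S.erase 0 : Set F) (nthRootsFinset (Q + 1) (1 : F)) := by
    intro y hy
    have hcard : (Q - 1) * (Q + 1) = Fintype.card F - 1 := by
      rw [hF, mul_comm, ← Nat.sq_sub_sq, one_pow]
    rw [mem_coe, mem_nthRootsFinset Q.add_one_pos, ← pow_mul, hcard]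
    exact FiniteField.pow_card_sub_one_eq_one y (ne_of_mem_erase hy)
  have hline : ∀ w, #{y | y ^ Q = w * y ∧ P w y} =
      (if P w 0 then 1 else 0) + #{y ∈ S.erase 0 | y ^ (Q - 1) = w} := fun w => by
    have herase : ({y | y ^ Q = w * y ∧ P w y} : Finset F).erase 0 =
        {y ∈ S.erase 0 | y ^ (Q - 1) = w} := by
      ext y
      simp only [mem_erase, mem_filter, mem_univ, true_and, hS, and_assoc, ← hpow]
      refine and_congr_right fun hy => ?_
      rw [mul_left_inj' hy, and_comm]
      exact and_congr_left (by rintro rfl; rfl)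
    have hmem : (0 : F) ∈ ({y | y ^ Q = w * y ∧ P w y} : Finset F) ↔ P w 0 := by
      simp [zero_pow (Nat.ne_zero_of_lt hQ)]
    rw [← herase]
    split_ifs with hw
    · rw [add_comm, card_erase_add_one (hmem.2 hw)]
    · rw [erase_eq_of_notMem (mt hmem.1 hw), zero_add]
  simp only [hline]
  rw [sum_add_distrib, ← card_filter, ← card_eq_sum_card_fiberwise hmaps,
    add_assoc, card_erase_add_one hzero]

lemma natCard_eq_pow_sq (hF : Module.finrank K F = 2 * t) : Nat.card F = (q ^ t) ^ 2 := by
  rw [Module.natCard_eq_pow_finrank (K := K), Nat.card_eq_fintype_card, hF, ← pow_mul, mul_comm]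

lemma exists_isPrimitiveRoot_pow_add_one (hF : Module.finrank K F = 2 * t) :
    ∃ ζ : F, IsPrimitiveRoot ζ (q ^ t + 1) :=
  exists_isPrimitiveRoot_of_dvd ⟨q ^ t - 1, by
    rw [natCard_eq_pow_sq hF, ← Nat.sq_sub_sq, one_pow]⟩

lemma card_linearForm_eq_add_card_modEq [Fintype F] [DecidableEq K] (ht : t ≠ 0)
    (hF : Module.finrank K F = 2 * t) (φ : F →ₗ[K] K) {g : F → K} (hg : g 0 = 0) :
    #{y : F | φ y = g (y ^ (q ^ t - 1))} + #{w ∈ nthRootsFinset (q ^ t + 1) (1 : F) | g w = 0} ≡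
      #{y : F | φ y = 0} + 1 [MOD q ^ t] := by
  classical
  set U := nthRootsFinset (q ^ t + 1) (1 : F) with hU
  have hQ : 1 < q ^ t := Nat.one_lt_pow ht Fintype.one_lt_card
  have hcard : Fintype.card F = (q ^ t) ^ 2 :=
    Nat.card_eq_fintype_card.symm.trans (natCard_eq_pow_sq hF)
  have hcardU : #U = q ^ t + 1 := by
    obtain ⟨ζ, hζ⟩ := exists_isPrimitiveRoot_pow_add_one hF
    exact hζ.card_nthRootsFinset
  have hline : ∑ w ∈ U, #{y | y ^ q ^ t = w * y ∧ φ y = g w} ≡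
      ∑ w ∈ U, #{y | y ^ q ^ t = w * y ∧ φ y = 0} [MOD q ^ t] := by
    refine Nat.ModEq.sum fun w hw => ?_
    have hmod := card_linearForm_eq_modEq (frobeniusLine K t w) φ (g w)
    rw [Module.natCard_eq_pow_finrank (K := K), Nat.card_eq_fintype_card,
      finrank_frobeniusLine ht hF ((mem_nthRootsFinset (q ^ t).add_one_pos 1).1 hw)] at hmod
    simpa only [mem_frobeniusLine] using hmod
  have hg' := sum_card_filter_pow_eq_mul hQ hcard (fun w y => φ y = g w) (by rw [map_zero, hg])
  have h0 := sum_card_filter_pow_eq_mul hQ hcard (fun _ y => φ y = 0) (map_zero φ)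
  simp only [map_zero, eq_comm (a := (0 : K)), filter_true, ← hU, hcardU] at hg' h0
  calc _ = ∑ w ∈ U, #{y | y ^ q ^ t = w * y ∧ φ y = g w} + 1 := by rw [hg', add_comm]
    _ ≡ ∑ w ∈ U, #{y | y ^ q ^ t = w * y ∧ φ y = 0} + 1 [MOD q ^ t] := hline.add_right 1
    _ = (#{y : F | φ y = 0} + 1) + q ^ t := by rw [h0]; ring
    _ ≡ #{y : F | φ y = 0} + 1 [MOD q ^ t] := Nat.add_modEq_right

end FrobeniusLine

lemma pow_add_one_dvd_pow_add_pow_iff {q t i : ℕ} (hq : 1 < q) (hi : i < 2 * t) :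
    q ^ t + 1 ∣ q ^ t + q ^ i ↔ i = 0 := by
  refine ⟨fun hdvd => ?_, by rintro rfl; rw [pow_zero]⟩
  obtain hit | ⟨j, rfl⟩ := (lt_or_ge i t).imp_right Nat.exists_eq_add_of_le
  · have hlt : q ^ i < q ^ t := Nat.pow_lt_pow_right hq hit
    have hpos : 0 < q ^ i := by positivity
    have hsub : q ^ t + 1 ∣ q ^ i - 1 := by
      have h := Nat.dvd_sub hdvd dvd_rfl
      rwa [Nat.add_sub_add_left] at h
    have hone : q ^ i = 1 := by
      have := Nat.eq_zero_of_dvd_of_lt hsub (by omega)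
      omega
    exact (Nat.pow_eq_one.1 hone).resolve_left hq.ne'
  · have hcop : Nat.Coprime (q ^ t + 1) (q ^ t) := by simp
    have hdvd' : q ^ t + 1 ∣ q ^ j + 1 := by
      refine hcop.dvd_of_dvd_mul_left ?_
      rwa [mul_add_one, ← pow_add, add_comm (q ^ (t + j))]
    have hlt : q ^ j < q ^ t := Nat.pow_lt_pow_right hq (by omega)
    exact absurd (Nat.le_of_dvd (Nat.add_one_pos _) hdvd') (by omega)

section TraceOnRootsOfUnity

variable {K F : Type*} [Field K] [Fintype K] [Field F] [Finite F] [Algebra K F] {t : ℕ}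

local notation "Tr" => Algebra.trace K F
local notation "q" => Fintype.card K
local notation "U" => nthRootsFinset (Fintype.card K ^ t + 1) (1 : F)

lemma algebraMap_trace_eq_sum_fin_pow (w : F) :
    algebraMap K F (Tr w) = ∑ i : Fin (Module.finrank K F), w ^ q ^ (i : ℕ) := by
  rw [FiniteField.algebraMap_trace_eq_sum_pow, sum_range, Nat.card_eq_fintype_card]

lemma exists_trace_ne_zero (ht : t ≠ 0) (hF : Module.finrank K F = 2 * t) :
    ∃ w ∈ U, Tr w ≠ 0 := by
  obtain ⟨ζ, hζ⟩ := exists_isPrimitiveRoot_pow_add_one hF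
  by_contra! hzero
  -- Summing `w ^ q ^ t * Tr w` over `U` isolates the term `w` of `Tr w`, because `w ^ q ^ t` is the
  -- inverse of `w`.
  have hsum : ∑ w ∈ U, w ^ q ^ t * algebraMap K F (Tr w) = 0 :=
    sum_eq_zero fun w hw => by rw [hzero w hw, map_zero, mul_zero]
  simp only [FiniteField.algebraMap_trace_eq_sum_pow, Nat.card_eq_fintype_card, mul_sum,
    ← pow_add] at hsum
  rw [sum_comm, sum_eq_single_of_mem 0 (by simp [hF, Nat.pos_of_ne_zero ht])] at hsum
  · have hq : (q : F) = 0 := by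
      rw [← map_natCast (algebraMap K F), FiniteField.cast_card_eq_zero, map_zero]
    rw [pow_zero, sum_nthRootsFinset_pow hζ (Nat.add_one_pos _), if_pos dvd_rfl] at hsum
    simp [hq, ht] at hsum
  · intro i hi hi0
    rw [hF, mem_range] at hi
    rw [sum_nthRootsFinset_pow hζ (Nat.add_one_pos _),
      if_neg (mt (pow_add_one_dvd_pow_add_pow_iff Fintype.one_lt_card hi).1 hi0)]

lemma natCast_pow_finrank_eq_one [CharP K 2] {s : ℕ} (hs : q = 2 ^ s) {n : ℕ} {ζ : F}
    (hζ : IsPrimitiveRoot ζ n) (hn : Module.finrank K F ^ s + 1 < n)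
    (htrace : ∀ w ∈ nthRootsFinset n (1 : F), w ≠ 1 → Tr w ≠ 0) :
    (Module.finrank K F : F) ^ s = 1 := by
  have : CharP F 2 := charP_of_injective_algebraMap (algebraMap K F).injective 2
  have hsum : ∀ w ∈ nthRootsFinset n (1 : F), w ≠ 1 →
      ∑ σ : Fin s → Fin (Module.finrank K F), w ^ ∑ a, q ^ (σ a : ℕ) * 2 ^ (a : ℕ) = 1 := by
    intro w hw hw1
    simp only [← prod_pow_eq_pow_sum, pow_mul]
    rw [← sum_pow_two_pow_sub_one fun i : Fin _ => w ^ q ^ (i : ℕ),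
      ← algebraMap_trace_eq_sum_fin_pow, ← hs, ← map_pow,
      FiniteField.pow_card_sub_one_eq_one _ (htrace w hw hw1), map_one]
  simpa using natCast_card_eq_of_sum_pow_eq hζ (by simpa using hn) _ 1 hsum

variable [DecidableEq K]

lemma card_filter_trace_eq_zero_ne (ht : t ≠ 0) (hF : Module.finrank K F = 2 * t) :
    #{w ∈ U | Tr w = 0} ≠ q ^ t + 1 := by
  obtain ⟨ζ, hζ⟩ := exists_isPrimitiveRoot_pow_add_one hF
  obtain ⟨w, hw, hne⟩ := exists_trace_ne_zero ht hF
  exact fun hcard => hne (card_filter_eq_iff.1 (hcard.trans hζ.card_nthRootsFinset.symm) w hw)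

lemma card_filter_trace_eq_zero_ne_one_of_odd (hq : Odd q) : #{w ∈ U | Tr w = 0} ≠ 1 := by
  intro hone
  obtain ⟨w, hw⟩ := card_eq_one.1 hone
  have hmem : w ∈ ({w ∈ U | Tr w = 0} : Finset F) := by simp [hw]
  have hneg : -w ∈ ({w ∈ U | Tr w = 0} : Finset F) := by
    rw [mem_filter, mem_nthRootsFinset (Nat.add_one_pos _)] at hmem ⊢
    rwa [(hq.pow.add_odd odd_one).neg_pow, map_neg, neg_eq_zero]
  have hchar : ringChar F ≠ 2 := fun h => by
    have := Fintype.ofFinite F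
    have hodd : Odd (Fintype.card F) := by
      rw [Module.card_eq_pow_finrank (K := K)]
      exact hq.pow
    exact (Nat.not_even_iff_odd.2 hodd) (Nat.even_iff.2 (FiniteField.even_card_of_char_two h))
  rw [hw, mem_singleton, Ring.eq_self_iff_eq_zero_of_char_ne_two hchar] at hneg
  rw [hneg, mem_filter, mem_nthRootsFinset (Nat.add_one_pos _), zero_pow (Nat.add_one_ne_zero _)]
    at hmem
  exact zero_ne_one hmem.1

lemma card_filter_trace_eq_zero_ne_one_of_even (hq : Even q) (ht : 2 < t)
    (hF : Module.finrank K F = 2 * t) : #{w ∈ U | Tr w = 0} ≠ 1 := by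
  intro hone
  have : CharP K 2 := ringChar.of_eq (FiniteField.even_card_iff_char_two.2 (Nat.even_iff.1 hq))
  have : CharP F 2 := charP_of_injective_algebraMap (algebraMap K F).injective 2
  obtain ⟨s, -, hs⟩ := FiniteField.card K 2
  obtain ⟨ζ, hζ⟩ := exists_isPrimitiveRoot_pow_add_one hF
  have htrace_one : Tr (1 : F) = 0 := by
    rw [← map_one (algebraMap K F), Algebra.trace_algebraMap, hF, mul_comm, mul_smul, two_smul,
      CharTwo.add_self_eq_zero, smul_zero]
  have htrace : ∀ w ∈ U, w ≠ 1 → Tr w ≠ 0 := fun w hw hw1 hzero =>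
    hw1 (card_le_one.1 hone.le w (mem_filter.2 ⟨hw, hzero⟩) 1
      (mem_filter.2 ⟨one_mem_nthRootsFinset (Nat.add_one_pos _), htrace_one⟩))
  have hlt : Module.finrank K F ^ (s : ℕ) + 1 < q ^ t + 1 := by
    have htwo : 2 * t < 2 ^ t := by
      refine Nat.le_induction (by norm_num) (fun n _ ih => ?_) t ht
      rw [pow_succ]
      omega
    rw [hF, hs, ← pow_mul, mul_comm (s : ℕ), pow_mul]
    exact Nat.add_lt_add_right (Nat.pow_lt_pow_left htwo s.ne_zero) 1
  have h := natCast_pow_finrank_eq_one hs hζ hlt htrace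
  rw [hF, Nat.cast_mul, Nat.cast_two, CharTwo.two_eq_zero, zero_mul, zero_pow s.ne_zero] at h
  exact zero_ne_one h

lemma card_filter_trace_eq_zero_not_modEq_one (hF : Module.finrank K F = 2 * t)
    (hq : Even q → 2 < t) : ¬#{w ∈ U | Tr w = 0} ≡ 1 [MOD q ^ t] := by
  intro hmod
  have hpos : 0 < Module.finrank K F := Module.finrank_pos
  have ht : t ≠ 0 := by omega
  have hne_one : #{w ∈ U | Tr w = 0} ≠ 1 := by
    obtain heven | hodd := Nat.even_or_odd q
    · exact card_filter_trace_eq_zero_ne_one_of_even heven (hq heven) hF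
    · exact card_filter_trace_eq_zero_ne_one_of_odd hodd
  have hlt : #{w ∈ U | Tr w = 0} < q ^ t + 1 := by
    obtain ⟨ζ, hζ⟩ := exists_isPrimitiveRoot_pow_add_one hF
    exact (hζ.card_nthRootsFinset ▸ card_filter_le _ _).lt_of_ne
      (card_filter_trace_eq_zero_ne ht hF)
  rw [Nat.ModEq, Nat.mod_eq_of_lt (Nat.one_lt_pow ht Fintype.one_lt_card)] at hmod
  obtain heq | hlt := (Nat.lt_add_one_iff.1 hlt).eq_or_lt
  · rw [heq, Nat.mod_self] at hmod
    exact zero_ne_one hmod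
  · exact hne_one (by rwa [Nat.mod_eq_of_lt hlt] at hmod)

lemma card_trace_mul_eq_mul_trace_pow_ne [Fintype F] (hF : Module.finrank K F = 2 * t)
    (hq : Even q → 2 < t) {k : K} (hk : k ≠ 0) (b : F) :
    #{y : F | Tr (b * y) = k * Tr (y ^ (q ^ t - 1))} ≠ q ^ (Module.finrank K F - 1) := by
  have hpos : 0 < Module.finrank K F := Module.finrank_pos
  have ht : t ≠ 0 := by omega
  intro hN
  have hdvd : q ^ t ∣ #{y : F | Tr (b * y) = k * Tr (y ^ (q ^ t - 1))} := by
    rw [hN]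
    exact pow_dvd_pow q (by omega)
  have hker : q ^ t ∣ #{y : F | Tr (b * y) = 0} := by
    obtain rfl | hb := eq_or_ne b 0
    · simpa [Module.card_eq_pow_finrank (K := K) (V := F)] using pow_dvd_pow q (by omega)
    · rw [card_trace_mul_eq_s10 hb]
      exact pow_dvd_pow q (by omega)
  have hmod := card_linearForm_eq_add_card_modEq ht hF (Algebra.traceForm K F b)
    (g := fun w => k * Tr w) (by simp)
  simp only [Algebra.traceForm_apply, mul_eq_zero, hk, false_or] at hmod
  exact card_filter_trace_eq_zero_not_modEq_one hF hq (Nat.ModEq.add_left_cancel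
    ((Nat.modEq_zero_iff_dvd.2 hdvd).trans (Nat.modEq_zero_iff_dvd.2 hker).symm) hmod)

end TraceOnRootsOfUnity

theorem stmt10_general {K F : Type*} [Field K] [Fintype K] [Field F] [Finite F] [Algebra K F]
    {t : ℕ} (hF : Module.finrank K F = 2 * t) (ht : Even (Fintype.card K) → 2 < t) :
    Set.ncard {ab : F × F | ab ≠ (0, 0) ∧
        codewordWeight K (· ^ (Fintype.card K ^ t - 1)) ab.1 ab.2 =
          Fintype.card K ^ (2 * (2 * t) - 2) * (Fintype.card K - 1)} =
      Fintype.card K ^ (2 * t) * (Fintype.card K ^ (2 * t) - Fintype.card K + 1) - 1 := by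
  classical
  have := Fintype.ofFinite F
  have hpos : 0 < Module.finrank K F := Module.finrank_pos
  rw [← hF]
  exact ncard_codewordWeight_eq _ (by omega) fun k hk b =>
    card_trace_mul_eq_mul_trace_pow_ne hF ht hk b

/-- The number of pairs `(a,b) ≠ (0,0)` whose codeword has Hamming weight
`p^{2m-2}(p-1)` is exactly `p^m(p^m - p + 1) - 1`. -/
theorem stmt10 (p t m : ℕ) [Fact p.Prime] (ht : 2 < t) (hm : m = 2 * t)
    (F : Type) [Field F] [Fintype F] [DecidableEq F] [Algebra (ZMod p) F]
    (hF : Fintype.card F = p ^ m)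
    (wt : F → F → ℕ)
    (hwt : ∀ a b : F, wt a b = Set.ncard {xy : F × F | xy ≠ (0, 0) ∧
      Algebra.trace (ZMod p) F (xy.1 + xy.2 ^ (p ^ t - 1)) = 0 ∧
      Algebra.trace (ZMod p) F (a * xy.1 + b * xy.2) ≠ 0}) :
    Set.ncard {ab : F × F | ab ≠ (0, 0) ∧ wt ab.1 ab.2 = p ^ (2 * m - 2) * (p - 1)}
      = p ^ m * (p ^ m - p + 1) - 1 := by
  have hfinrank : Module.finrank (ZMod p) F = 2 * t := by
    rw [Module.card_eq_pow_finrank (K := ZMod p), ZMod.card, hm] at hF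
    exact Nat.pow_right_injective (Fact.out : p.Prime).two_le hF
  simpa only [ZMod.card, codewordWeight, ← hwt, ← hm] using stmt10_general hfinrank fun _ => ht
end

section
/- The number of pairs (a,b) with a a nonzero element of the prime subfield F_p, b ∈ F_q^*, and such that the unique v ∈ Γ with Tr_{q/t}(bv) = 0 satisfies Tr(v^{p^t−1}) = 0, is exactly ((p−1)(p^m−1) + (p^{t+1} − p^t − p + 1)·S)/p; moreover every such pair satisfies wt(a,b) = (p^{2m−2} − p^{m−2})(p−1) − p^{m−2}(p^t(p−1) − S). -/
open Finset

/-!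
Let `k ⊆ E ⊆ F` be finite fields with `[F : E] = 2`, `q = |E|` and `r = |k|`, and let `Δ` be the
group of `(q + 1)`-st roots of unity of `F`. For `w ≠ 0` the relative trace `w + w ^ q` vanishes
iff `w ^ (q - 1) = -1`, so `Tr (b v) = 0` forces `v ^ (q - 1)` to be `-1` times a conjugate of
`b ^ (q - 1)`: the condition on `v ∈ Γ` says that the absolute trace of `b ^ (q - 1)` is zero.
As `y ↦ y ^ (q - 1)` is `(q - 1)`-to-one from `Fˣ` onto `Δ`, the number of such `b` is `(q - 1) K`,
where `K` counts the elements of `Δ` of trace zero, and orthogonality of characters gives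
`S = r K - (q + 1)`.

For the weight, replacing `x` by `x - y ^ (q - 1)` reduces the count to the number `N` of `y` with
`tr (b y) = a tr (y ^ (q - 1))`. Scaling `y` by `e ∈ Eˣ` fixes `y ^ (q - 1)` and multiplies the
relative trace of `b y` by `e`, so `N` is found by counting in two ways the pairs `(y, e)` with
`tr (e Tr (b y)) = a tr (y ^ (q - 1))`: for fixed `y` this is one linear condition on `e`, vacuous
if `Tr (b y) = 0` because then `tr (y ^ (q - 1)) = 0`.
-/

namespace TraceCode

open Polynomial

section Counting

theorem sum_ne_zero_sum_addChar_mul {k R ι : Type*} [CommRing k] [Fintype k] [DecidableEq k]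
    [CommRing R] [IsDomain R] {ψ : AddChar k R} (hψ : ψ.IsPrimitive) (s : Finset ι) (f : ι → k) :
    ∑ z ∈ ({0}ᶜ : Finset k), ∑ i ∈ s, ψ (z * f i) =
      Fintype.card k * #{i ∈ s | f i = 0} - #s := by
  have sum_ne_zero (c : k) :
      ∑ z ∈ ({0}ᶜ : Finset k), ψ (z * c) = Fintype.card k * (if c = 0 then 1 else 0) - 1 := by
    have h := AddChar.sum_mulShift c hψ
    rw [← sum_compl_add_sum {0}, sum_singleton, zero_mul, AddChar.map_zero_eq_one] at h
    rw [eq_sub_of_add_eq h]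
    split_ifs <;> simp
  rw [sum_comm, sum_congr rfl fun i _ => sum_ne_zero (f i), sum_sub_distrib, ← mul_sum]
  simp

theorem ncard_setOf_map_add_eq_zero_and_ne_zero {R V M Y : Type*} [Ring R] [AddCommGroup V]
    [AddCommGroup M] [Module R V] [Module R M] (f : V →ₗ[R] M) (g h : Y → V) (a : R) :
    {xy : V × Y | f (xy.1 + g xy.2) = 0 ∧ f (a • xy.1 + h xy.2) ≠ 0}.ncard =
      {x | f x = 0}.ncard * {y | f (h y) ≠ a • f (g y)}.ncard := by
  have map_smul_add {x : V} {y : Y} (hx : f (x + g y) = 0) :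
      f (a • x + h y) = f (h y) - a • f (g y) := by
    rw [map_add] at hx ⊢
    rw [map_smul, eq_neg_of_add_eq_zero_left hx, smul_neg, neg_add_eq_sub]
  have shear : {xy : V × Y | f (xy.1 + g xy.2) = 0 ∧ f (a • xy.1 + h xy.2) ≠ 0} =
      (fun xy : V × Y => (xy.1 - g xy.2, xy.2)) ''
        ({x | f x = 0} ×ˢ {y | f (h y) ≠ a • f (g y)}) := by
    ext ⟨x, y⟩
    constructor
    · rintro ⟨hx, hy⟩
      rw [map_smul_add hx, sub_ne_zero] at hy
      exact ⟨(x + g y, y), ⟨hx, hy⟩, by simp⟩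
    · rintro ⟨⟨x', y'⟩, ⟨hx, hy⟩, hxy⟩
      obtain ⟨rfl, rfl⟩ := Prod.ext_iff.1 hxy
      have hx' : f (x' - g y' + g y') = 0 := by rwa [sub_add_cancel]
      exact ⟨hx', by rw [map_smul_add hx']; exact sub_ne_zero.2 hy⟩
  have shear_injective : Function.Injective fun xy : V × Y => (xy.1 - g xy.2, xy.2) := by
    rintro ⟨x, y⟩ ⟨x', y'⟩ hxy
    obtain ⟨hx, rfl⟩ := Prod.ext_iff.1 hxy
    exact congrArg (·, y) (sub_left_injective hx)
  rw [shear, Set.ncard_image_of_injective _ shear_injective, Set.ncard_prod]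

theorem card_filter_trace_mul_eq {K L : Type*} [Field K] [DecidableEq K] [Field L]
    [Fintype L] [Algebra K L] {c : L} (hc : c ≠ 0) (s : K) :
    Nat.card K * #{x : L | Algebra.trace K L (x * c) = s} = Fintype.card L := by
  have : Finite K := Finite.of_injective _ (algebraMap K L).injective
  let f : L →+ K := (Algebra.trace K L).toAddMonoidHom.comp (AddMonoidHom.mulRight c)
  have hf : Function.Surjective f := fun x => by
    obtain ⟨y, rfl⟩ := Algebra.trace_surjective K L x
    exact ⟨y / c, by simp [f, div_mul_cancel₀ _ hc]⟩
  have hfiber : #{x : L | f x = s} = Nat.card f.ker := by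
    rw [← Nat.card_congr (AddMonoidHom.fiberEquivKerOfSurjective hf s)]
    exact (Nat.subtype_card _ (by simp)).symm
  rw [← Nat.card_eq_fintype_card, ← f.ker.card_mul_index, AddSubgroup.index_ker,
    AddMonoidHom.range_eq_top.2 hf, AddSubgroup.card_top, mul_comm, ← hfiber]
  rfl

theorem card_filter_pow_nthRootsFinset {F : Type*} [CommRing F] [IsDomain F] {n d : ℕ}
    (hn : 0 < n) (hd : 0 < d) {ω : F} (hω : IsPrimitiveRoot ω (n * d)) (R : F → Prop)
    [DecidablePred R] :
    #{y ∈ nthRootsFinset (n * d) (1 : F) | R (y ^ n)} =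
      n * #{u ∈ nthRootsFinset d (1 : F) | R u} := by
  classical
  have : NeZero d := ⟨hd.ne'⟩
  have hωn : IsPrimitiveRoot (ω ^ n) d := hω.pow (by positivity) rfl
  have hωd : IsPrimitiveRoot (ω ^ d) n := hω.pow (by positivity) (mul_comm _ _)
  have card_fiber : ∀ u ∈ {u ∈ nthRootsFinset d (1 : F) | R u},
      #{y ∈ {y ∈ nthRootsFinset (n * d) (1 : F) | R (y ^ n)} | y ^ n = u} = n := by
    intro u hu
    rw [mem_filter, mem_nthRootsFinset hd] at hu
    have hu0 : u ≠ 0 := by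
      rintro rfl
      simp [hd.ne'] at hu
    obtain ⟨i, -, hi⟩ := hωn.eq_pow_of_pow_eq_one hu.1
    have hfiber : {y ∈ {y ∈ nthRootsFinset (n * d) (1 : F) | R (y ^ n)} | y ^ n = u} =
        nthRootsFinset n u := by
      ext y
      rw [mem_filter, mem_filter, mem_nthRootsFinset (by positivity), mem_nthRootsFinset hn,
        and_iff_right_iff_imp, pow_mul]
      rintro rfl
      exact hu
    rw [hfiber, nthRootsFinset_def, Multiset.toFinset_card_of_nodup (hωd.nthRoots_nodup hu0),
      hωd.card_nthRoots, if_pos ⟨ω ^ i, by rw [pow_right_comm, hi]⟩]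
  rw [card_eq_sum_card_fiberwise (f := (· ^ n)) (t := {u ∈ nthRootsFinset d (1 : F) | R u}),
    sum_congr rfl card_fiber, sum_const, smul_eq_mul, mul_comm]
  intro y hy
  simpa [mem_nthRootsFinset, hn, hd, pow_mul] using hy

end Counting

section Quadratic

variable (E : Type*) {F : Type*} [Field E] [Field F] [Algebra E F]

variable (F) in
theorem one_lt_natCard_base [Finite F] : 1 < Nat.card E := by
  have : Finite E := Finite.of_injective _ (algebraMap E F).injective
  exact Finite.one_lt_card

variable {E} in
theorem algebraMap_pow_natCard_sub_one [Finite F] {e : E} (he : e ≠ 0) :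
    algebraMap E F e ^ (Nat.card E - 1) = 1 := by
  have : Finite E := Finite.of_injective _ (algebraMap E F).injective
  have := Fintype.ofFinite E
  rw [← map_pow, Nat.card_eq_fintype_card, FiniteField.pow_card_sub_one_eq_one e he, map_one]

theorem trace_pow_natCard {k : Type*} [Field k] [Algebra k E] [Algebra k F] [IsScalarTower k E F]
    [Finite F] (x : F) : Algebra.trace k F (x ^ Nat.card E) = Algebra.trace k F x := by
  have : Finite E := Finite.of_injective _ (algebraMap E F).injective
  have := Fintype.ofFinite E
  have h := Algebra.trace_eq_of_algEquiv (FiniteField.frobeniusAlgEquivOfAlgebraic E F) x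
  rw [← Algebra.trace_trace (S := E), ← Algebra.trace_trace (S := E) x, Nat.card_eq_fintype_card]
  exact congrArg _ h

theorem card_filter_trace_mul_trace_eq_of_ne_zero {k : Type*} [Field k] [DecidableEq k]
    [Algebra k E] [Algebra k F] [IsScalarTower k E F] [Fintype F] (a : k) (b : F) {e : E}
    (he : e ≠ 0) :
    #{y : F | Algebra.trace k E (e * Algebra.trace E F (b * y)) =
        a * Algebra.trace k F (y ^ (Nat.card E - 1))} =
      #{y : F | Algebra.trace k F (b * y) = a * Algebra.trace k F (y ^ (Nat.card E - 1))} := by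
  have : Module.Finite k E :=
    Module.Finite.of_injective (IsScalarTower.toAlgHom k E F).toLinearMap (algebraMap E F).injective
  refine card_equiv (Equiv.mulLeft₀ (algebraMap E F e) (by simpa using he)) fun y => ?_
  rw [mem_filter_univ, mem_filter_univ, Equiv.mulLeft₀_apply, mul_pow,
    algebraMap_pow_natCard_sub_one he, one_mul, mul_left_comm, ← Algebra.smul_def,
    ← Algebra.trace_trace (S := E) (e • _), map_smul, smul_eq_mul]

variable {E} in
theorem isQuadraticExtension_of_natCard_eq_sq [Finite F] (h : Nat.card F = Nat.card E ^ 2) :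
    Algebra.IsQuadraticExtension E F where
  finrank_eq_two' := Nat.pow_right_injective (one_lt_natCard_base E F)
    ((Module.natCard_eq_pow_finrank (K := E) (V := F)).symm.trans h)

variable [Algebra.IsQuadraticExtension E F]

variable (F) in
theorem natCard_eq_sq : Nat.card F = Nat.card E ^ 2 := by
  rw [Module.natCard_eq_pow_finrank (K := E), Algebra.IsQuadraticExtension.finrank_eq_two]

variable (F) in
theorem natCard_sub_one_mul_natCard_add_one :
    (Nat.card E - 1) * (Nat.card E + 1) = Nat.card F - 1 := by
  rw [natCard_eq_sq E F, ← one_pow 2, Nat.sq_sub_sq, one_pow, mul_comm]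

variable (F) in
theorem exists_ne_zero_trace_eq_zero : ∃ w : F, w ≠ 0 ∧ Algebra.trace E F w = 0 := by
  have hker : LinearMap.ker (Algebra.trace E F) ≠ ⊥ := LinearMap.ker_ne_bot_of_finrank_lt <| by
    rw [Module.finrank_self, Algebra.IsQuadraticExtension.finrank_eq_two]
    exact one_lt_two
  obtain ⟨w, hw, hw0⟩ := Submodule.exists_mem_ne_zero_of_ne_bot hker
  exact ⟨w, hw0, hw⟩

theorem isPrimitiveRoot_of_forall_mem_zpowers {α : Fˣ}
    (hα : ∀ x : Fˣ, x ∈ Subgroup.zpowers α) :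
    IsPrimitiveRoot (α : F) ((Nat.card E - 1) * (Nat.card E + 1)) := by
  rw [natCard_sub_one_mul_natCard_add_one E F, ← Nat.card_units,
    ← orderOf_eq_card_of_forall_mem_zpowers hα, IsPrimitiveRoot.coe_units_iff]
  exact IsPrimitiveRoot.orderOf α

variable [Finite F]

theorem trace_eq_zero_iff {w : F} (hw : w ≠ 0) :
    Algebra.trace E F w = 0 ↔ w ^ (Nat.card E - 1) = -1 := by
  have htrace : algebraMap E F (Algebra.trace E F w) = w * (w ^ (Nat.card E - 1) + 1) := by
    rw [FiniteField.algebraMap_trace_eq_sum_pow, Algebra.IsQuadraticExtension.finrank_eq_two,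
      sum_range_succ, sum_range_one, pow_zero, pow_one, pow_one, mul_add, mul_one, ← pow_succ',
      Nat.sub_add_cancel (one_lt_natCard_base E F).le, add_comm]
  rw [← map_eq_zero (algebraMap E F), htrace, mul_eq_zero, or_iff_right hw,
    add_eq_zero_iff_eq_neg]

theorem pow_natCard_sub_one_pow_natCard_add_one {y : F} (hy : y ≠ 0) :
    (y ^ (Nat.card E - 1)) ^ (Nat.card E + 1) = 1 := by
  have := Fintype.ofFinite F
  rw [← pow_mul, natCard_sub_one_mul_natCard_add_one E F, Nat.card_eq_fintype_card,
    FiniteField.pow_card_sub_one_eq_one y hy]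

theorem exists_pow_pow_natCard_sub_one_eq {α : Fˣ} (hα : ∀ x : Fˣ, x ∈ Subgroup.zpowers α)
    {y : F} (hy : y ≠ 0) :
    ∃ j ≤ Nat.card E, ((α : F) ^ j) ^ (Nat.card E - 1) = y ^ (Nat.card E - 1) := by
  have hq := one_lt_natCard_base E F
  have hroot := (isPrimitiveRoot_of_forall_mem_zpowers E hα).pow
    (Nat.mul_pos (by omega) (by omega)) rfl
  obtain ⟨j, hj, hjy⟩ :=
    hroot.eq_pow_of_pow_eq_one (pow_natCard_sub_one_pow_natCard_add_one E hy)
  exact ⟨j, Nat.lt_succ_iff.1 hj, by rw [pow_right_comm, hjy]⟩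

theorem exists_pow_trace_mul_eq_zero {α : Fˣ} (hα : ∀ x : Fˣ, x ∈ Subgroup.zpowers α) {b : F}
    (hb : b ≠ 0) : ∃ j ≤ Nat.card E, Algebra.trace E F (b * (α : F) ^ j) = 0 := by
  obtain ⟨w, hw0, hw⟩ := exists_ne_zero_trace_eq_zero E F
  obtain ⟨j, hj, hjw⟩ := exists_pow_pow_natCard_sub_one_eq E hα (div_ne_zero hw0 hb)
  refine ⟨j, hj, (trace_eq_zero_iff E (mul_ne_zero hb (pow_ne_zero j α.ne_zero))).2 ?_⟩
  rw [mul_pow, hjw, ← mul_pow, mul_div_cancel₀ _ hb, (trace_eq_zero_iff E hw0).1 hw]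

theorem trace_pow_eq_neg_of_trace_mul_eq_zero {k : Type*} [Field k] [Algebra k E] [Algebra k F]
    [IsScalarTower k E F] {b v : F} (hb : b ≠ 0) (hv : v ≠ 0)
    (hbv : Algebra.trace E F (b * v) = 0) :
    Algebra.trace k F (v ^ (Nat.card E - 1)) = -Algebra.trace k F (b ^ (Nat.card E - 1)) := by
  have hb_pow := pow_natCard_sub_one_pow_natCard_add_one E hb
  have hbv_pow := (trace_eq_zero_iff E (mul_ne_zero hb hv)).1 hbv
  have hv_pow : v ^ (Nat.card E - 1) = -(b ^ (Nat.card E - 1)) ^ Nat.card E := by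
    rw [pow_succ] at hb_pow
    rw [mul_pow] at hbv_pow
    linear_combination (b ^ (Nat.card E - 1)) ^ Nat.card E * hbv_pow -
      v ^ (Nat.card E - 1) * hb_pow
  rw [hv_pow, map_neg, trace_pow_natCard E]

theorem exists_mem_trace_mul_eq_zero_and_iff {k : Type*} [Field k] [Algebra k E] [Algebra k F]
    [IsScalarTower k E F] {α : Fˣ} (hα : ∀ x : Fˣ, x ∈ Subgroup.zpowers α) {b : F} (hb : b ≠ 0) :
    (∃ v ∈ {v : F | ∃ j ≤ Nat.card E, v = (α : F) ^ j}, Algebra.trace E F (b * v) = 0 ∧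
        Algebra.trace k F (v ^ (Nat.card E - 1)) = 0) ↔
      Algebra.trace k F (b ^ (Nat.card E - 1)) = 0 := by
  have trace_eq (j : ℕ) (hj : Algebra.trace E F (b * (α : F) ^ j) = 0) :=
    trace_pow_eq_neg_of_trace_mul_eq_zero E (k := k) hb (pow_ne_zero j α.ne_zero) hj
  constructor
  · rintro ⟨_, ⟨j, -, rfl⟩, hbv, htv⟩
    rwa [trace_eq j hbv, neg_eq_zero] at htv
  · intro htb
    obtain ⟨j, hj, hbv⟩ := exists_pow_trace_mul_eq_zero E hα hb
    exact ⟨_, ⟨j, hj, rfl⟩, hbv, by rw [trace_eq j hbv, htb, neg_zero]⟩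

theorem natCard_mul_card_filter_trace_mul_trace_eq_ite {k : Type*} [Field k] [DecidableEq k]
    [Algebra k E] [Algebra k F] [IsScalarTower k E F] [Fintype E] [DecidableEq E] (a : k) {b : F}
    (hb : b ≠ 0) (htb : Algebra.trace k F (b ^ (Nat.card E - 1)) = 0) (y : F) :
    Nat.card k * #{e : E | Algebra.trace k E (e * Algebra.trace E F (b * y)) =
        a * Algebra.trace k F (y ^ (Nat.card E - 1))} =
      if Algebra.trace E F (b * y) = 0 then Nat.card k * Nat.card E else Nat.card E := by
  have hq := one_lt_natCard_base E F
  split_ifs with hy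
  · have hty : Algebra.trace k F (y ^ (Nat.card E - 1)) = 0 := by
      obtain rfl | hy0 := eq_or_ne y 0
      · rw [zero_pow (by omega), map_zero]
      · rw [trace_pow_eq_neg_of_trace_mul_eq_zero E hb hy0 hy, htb, neg_zero]
    rw [hy, hty]
    simp [Nat.card_eq_fintype_card]
  · rw [card_filter_trace_mul_eq hy, Nat.card_eq_fintype_card]

end Quadratic

section Tower

variable {k : Type*} (E : Type*) {F : Type*} [Field E] [Field F] [Algebra E F]
  [Algebra.IsQuadraticExtension E F] [Fintype F]

theorem card_filter_ne_zero_and_pow_natCard_sub_one [DecidableEq F] (R : F → Prop)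
    [DecidablePred R] :
    #{y : F | y ≠ 0 ∧ R (y ^ (Nat.card E - 1))} =
      (Nat.card E - 1) * #{u ∈ nthRootsFinset (Nat.card E + 1) (1 : F) | R u} := by
  have hq := one_lt_natCard_base E F
  have hq_pos : 0 < Nat.card E - 1 := by omega
  obtain ⟨α, hα⟩ := IsCyclic.exists_generator (α := Fˣ)
  have hunits (y : F) :
      y ∈ nthRootsFinset ((Nat.card E - 1) * (Nat.card E + 1)) (1 : F) ↔ y ≠ 0 := by
    rw [mem_nthRootsFinset (by positivity), pow_mul]
    refine ⟨?_, pow_natCard_sub_one_pow_natCard_add_one E⟩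
    rintro hy rfl
    simp [hq_pos.ne'] at hy
  rw [← card_filter_pow_nthRootsFinset hq_pos (by omega)
    (isPrimitiveRoot_of_forall_mem_zpowers E hα)]
  congr 1
  ext y
  simp [hunits]

theorem card_filter_pow_natCard_sub_one {R : F → Prop} [DecidablePred R] (h0 : R 0) :
    #{y : F | R (y ^ (Nat.card E - 1))} =
      1 + (Nat.card E - 1) * #{u ∈ nthRootsFinset (Nat.card E + 1) (1 : F) | R u} := by
  classical
  have hq := one_lt_natCard_base E F
  have hinsert : univ.filter (fun y : F => R (y ^ (Nat.card E - 1))) =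
      insert 0 (univ.filter fun y : F => y ≠ 0 ∧ R (y ^ (Nat.card E - 1))) := by
    ext y
    obtain rfl | hy := eq_or_ne y 0
    · simpa [zero_pow (show Nat.card E - 1 ≠ 0 by omega)] using h0
    · simp [hy]
  rw [hinsert, card_insert_of_notMem (by simp), card_filter_ne_zero_and_pow_natCard_sub_one,
    add_comm]

theorem card_filter_trace_eq_zero {b : F} [DecidableEq E] (hb : b ≠ 0) :
    #{y : F | Algebra.trace E F (b * y) = 0} = Nat.card E := by
  have hq := one_lt_natCard_base E F
  have h := card_filter_trace_mul_eq hb (0 : E)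
  simp_rw [mul_comm _ b] at h
  rw [← Nat.card_eq_fintype_card, natCard_eq_sq E F, sq] at h
  exact Nat.eq_of_mul_eq_mul_left (by omega) h

variable [Field k] [Algebra k E] [Algebra k F] [IsScalarTower k E F] [DecidableEq k]

theorem natCard_mul_sum_card_filter_trace_mul_trace_eq [Fintype E] (a : k) {b : F}
    (hb : b ≠ 0) (htb : Algebra.trace k F (b ^ (Nat.card E - 1)) = 0) :
    Nat.card k * ∑ y : F, #{e : E | Algebra.trace k E (e * Algebra.trace E F (b * y)) =
        a * Algebra.trace k F (y ^ (Nat.card E - 1))} =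
      Nat.card E ^ 2 * (Nat.card k + (Nat.card E - 1)) := by
  classical
  have hcard_ne : #{y : F | ¬Algebra.trace E F (b * y) = 0} = (Nat.card E - 1) * Nat.card E := by
    rw [filter_not, card_sdiff_of_subset (filter_subset _ _), card_filter_trace_eq_zero E hb,
      card_univ, ← Nat.card_eq_fintype_card, natCard_eq_sq E F, sq, Nat.sub_one_mul]
  rw [mul_sum, sum_congr rfl fun y _ => natCard_mul_card_filter_trace_mul_trace_eq_ite E a hb htb y,
    sum_ite, sum_const, sum_const, card_filter_trace_eq_zero E hb, hcard_ne, smul_eq_mul,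
    smul_eq_mul]
  ring

theorem sum_card_filter_trace_mul_trace_eq [Fintype E] {a : k} (ha : a ≠ 0) (b : F) :
    ∑ e : E, #{y : F | Algebra.trace k E (e * Algebra.trace E F (b * y)) =
        a * Algebra.trace k F (y ^ (Nat.card E - 1))} =
      1 + (Nat.card E - 1) *
        (#{u ∈ nthRootsFinset (Nat.card E + 1) (1 : F) | Algebra.trace k F u = 0} +
          #{y : F | Algebra.trace k F (b * y) =
            a * Algebra.trace k F (y ^ (Nat.card E - 1))}) := by
  classical
  have hzero : #{y : F | Algebra.trace k E (0 * Algebra.trace E F (b * y)) =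
      a * Algebra.trace k F (y ^ (Nat.card E - 1))} = 1 + (Nat.card E - 1) *
        #{u ∈ nthRootsFinset (Nat.card E + 1) (1 : F) | Algebra.trace k F u = 0} := by
    simpa [ha] using card_filter_pow_natCard_sub_one (R := fun u => Algebra.trace k F u = 0) E
      (map_zero _)
  rw [← add_sum_erase _ _ (mem_univ (0 : E)), hzero,
    sum_congr rfl fun e he => card_filter_trace_mul_trace_eq_of_ne_zero E a b (ne_of_mem_erase he),
    sum_const, card_erase_of_mem (mem_univ _), card_univ, Nat.card_eq_fintype_card, smul_eq_mul,
    mul_add, add_assoc]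

theorem natCard_mul_card_filter_trace_add {a : k} (ha : a ≠ 0) {b : F} (hb : b ≠ 0)
    (htb : Algebra.trace k F (b ^ (Nat.card E - 1)) = 0) :
    Nat.card k * #{y : F | Algebra.trace k F (b * y) =
        a * Algebra.trace k F (y ^ (Nat.card E - 1))} +
      Nat.card k * #{u ∈ nthRootsFinset (Nat.card E + 1) (1 : F) | Algebra.trace k F u = 0} =
    Nat.card E ^ 2 + Nat.card k * (Nat.card E + 1) := by
  classical
  have : Finite E := Finite.of_injective _ (algebraMap E F).injective
  have := Fintype.ofFinite E
  have hdouble := natCard_mul_sum_card_filter_trace_mul_trace_eq E a hb htb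
  have hswap := sum_card_bipartiteAbove_eq_sum_card_bipartiteBelow (s := univ) (t := univ)
    fun (y : F) (e : E) => Algebra.trace k E (e * Algebra.trace E F (b * y)) =
      a * Algebra.trace k F (y ^ (Nat.card E - 1))
  unfold bipartiteAbove bipartiteBelow at hswap
  rw [hswap, sum_card_filter_trace_mul_trace_eq E ha] at hdouble
  have hq := one_lt_natCard_base E F
  refine Nat.eq_of_mul_eq_mul_left (Nat.sub_pos_of_lt hq) ?_
  zify [hq.le] at hdouble ⊢
  linear_combination hdouble

end Tower

section Code

variable {k : Type*} (E : Type*) {F : Type*} [Field k] [DecidableEq k] [Field E] [Field F]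
  [Algebra k F] [Algebra E F] [Algebra.IsQuadraticExtension E F] [Finite F]

theorem sum_ne_zero_sum_addChar_trace [Fintype k] {R : Type*} [CommRing R] [IsDomain R]
    {ψ : AddChar k R} (hψ : ψ.IsPrimitive) :
    ∑ z ∈ ({0}ᶜ : Finset k), ∑ x ∈ nthRootsFinset (Nat.card E + 1) (1 : F),
        ψ (Algebra.trace k F (algebraMap k F z * x)) =
      Nat.card k * #{u ∈ nthRootsFinset (Nat.card E + 1) (1 : F) | Algebra.trace k F u = 0} -
        (Nat.card E + 1) := by
  obtain ⟨α, hα⟩ := IsCyclic.exists_generator (α := Fˣ)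
  have hq := one_lt_natCard_base E F
  have hroot := (isPrimitiveRoot_of_forall_mem_zpowers E hα).pow
    (Nat.mul_pos (by omega) (by omega)) rfl
  simp_rw [← Algebra.smul_def, map_smul, smul_eq_mul]
  rw [sum_ne_zero_sum_addChar_mul hψ, hroot.card_nthRootsFinset, Nat.cast_succ,
    Nat.card_eq_fintype_card (α := k)]

variable [Algebra k E] [IsScalarTower k E F]

theorem natCard_sq_mul_ncard_trace_ne_zero_add {a : k} (ha : a ≠ 0) {b : F} (hb : b ≠ 0)
    (htb : Algebra.trace k F (b ^ (Nat.card E - 1)) = 0) :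
    Nat.card k ^ 2 * {xy : F × F | xy ≠ (0, 0) ∧
        Algebra.trace k F (xy.1 + xy.2 ^ (Nat.card E - 1)) = 0 ∧
        Algebra.trace k F (algebraMap k F a * xy.1 + b * xy.2) ≠ 0}.ncard +
      Nat.card E ^ 2 * (Nat.card E ^ 2 + Nat.card k * (Nat.card E + 1)) =
    Nat.card k * Nat.card E ^ 4 + Nat.card E ^ 2 * (Nat.card k *
      #{u ∈ nthRootsFinset (Nat.card E + 1) (1 : F) | Algebra.trace k F u = 0}) := by
  classical
  have := Fintype.ofFinite F
  have hker : Nat.card k * {x : F | Algebra.trace k F x = 0}.ncard = Nat.card E ^ 2 := by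
    have h := card_filter_trace_mul_eq (one_ne_zero (α := F)) (0 : k)
    rw [← Nat.card_eq_fintype_card, natCard_eq_sq E F] at h
    simpa only [Set.ncard_eq_toFinset_card', Set.toFinset_ofPred, mul_one] using h
  have hcompl : #{y : F | Algebra.trace k F (b * y) =
      a * Algebra.trace k F (y ^ (Nat.card E - 1))} + {y : F | Algebra.trace k F (b * y) ≠
      a * Algebra.trace k F (y ^ (Nat.card E - 1))}.ncard = Nat.card E ^ 2 := by
    rw [Set.ncard_eq_toFinset_card', Set.toFinset_ofPred, card_filter_add_card_filter_not,
      card_univ, ← Nat.card_eq_fintype_card, natCard_eq_sq E F]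
  have hN := natCard_mul_card_filter_trace_add E ha hb htb
  have hshear := ncard_setOf_map_add_eq_zero_and_ne_zero (Algebra.trace k F)
    (fun y : F => y ^ (Nat.card E - 1)) (b * ·) a
  simp only [Algebra.smul_def, Algebra.algebraMap_self_apply] at hshear
  have ne_zero_of_trace_ne_zero (xy : F × F)
      (hxy : Algebra.trace k F (xy.1 + xy.2 ^ (Nat.card E - 1)) = 0 ∧
        Algebra.trace k F (algebraMap k F a * xy.1 + b * xy.2) ≠ 0) : xy ≠ (0, 0) := by
    rintro rfl
    simp at hxy
  simp_rw [and_iff_right_of_imp (ne_zero_of_trace_ne_zero _), hshear]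
  zify at hker hcompl hN ⊢
  linear_combination
    (Nat.card k : ℤ) * {y : F | Algebra.trace k F (b * y) ≠
      a * Algebra.trace k F (y ^ (Nat.card E - 1))}.ncard * hker +
    Nat.card k * (Nat.card E : ℤ) ^ 2 * hcompl - (Nat.card E : ℤ) ^ 2 * hN

theorem ncard_setOf_exists_mem_trace_mul_eq_zero {α : Fˣ}
    (hα : ∀ x : Fˣ, x ∈ Subgroup.zpowers α) :
    {ab : F × F | (∃ z : k, z ≠ 0 ∧ algebraMap k F z = ab.1) ∧ ab.2 ≠ 0 ∧
        ∃ v ∈ {v : F | ∃ j ≤ Nat.card E, v = (α : F) ^ j}, Algebra.trace E F (ab.2 * v) = 0 ∧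
          Algebra.trace k F (v ^ (Nat.card E - 1)) = 0}.ncard =
      (Nat.card k - 1) * ((Nat.card E - 1) *
        #{u ∈ nthRootsFinset (Nat.card E + 1) (1 : F) | Algebra.trace k F u = 0}) := by
  classical
  have := Fintype.ofFinite F
  have : Finite k := Finite.of_injective _ (algebraMap k F).injective
  have hprod : {ab : F × F | (∃ z : k, z ≠ 0 ∧ algebraMap k F z = ab.1) ∧ ab.2 ≠ 0 ∧
        ∃ v ∈ {v : F | ∃ j ≤ Nat.card E, v = (α : F) ^ j}, Algebra.trace E F (ab.2 * v) = 0 ∧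
          Algebra.trace k F (v ^ (Nat.card E - 1)) = 0} =
      (algebraMap k F '' {0}ᶜ) ×ˢ ((univ.filter fun b : F =>
        b ≠ 0 ∧ Algebra.trace k F (b ^ (Nat.card E - 1)) = 0 : Finset F) : Set F) := by
    ext ⟨a, b⟩
    rw [Set.mem_prod, mem_coe, mem_filter_univ]
    exact and_congr_right fun _ =>
      and_congr_right fun hb => exists_mem_trace_mul_eq_zero_and_iff E hα hb
  rw [hprod, Set.ncard_prod, Set.ncard_image_of_injective _ (algebraMap k F).injective,
    Set.ncard_compl, Set.ncard_singleton, Set.ncard_coe_finset,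
    card_filter_ne_zero_and_pow_natCard_sub_one E fun u => Algebra.trace k F u = 0]

end Code
end TraceCode

theorem stmt11_general (p t m : ℕ) [Fact p.Prime] (hm : m = 2 * t)
    (F : Type*) [Field F] [Fintype F] [DecidableEq F] [Algebra (ZMod p) F]
    (hF : Fintype.card F = p ^ m)
    (E : Subfield F) (hE : Nat.card E = p ^ t)
    (α : Fˣ) (hα : ∀ x : Fˣ, x ∈ Subgroup.zpowers α)
    (Γ : Set F) (hΓ : Γ = {v : F | ∃ j ≤ p ^ t, v = (α : F) ^ j})
    {R : Type*} [Field R] (ζ : R) (hζ : IsPrimitiveRoot ζ p)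
    (χ : F → R) (hχ : ∀ x, χ x = ζ ^ (Algebra.trace (ZMod p) F x).val)
    (Δ : Finset F) (hΔ : Δ = univ.filter (fun x : F => x ^ (p ^ t + 1) = 1))
    (S : R) (hS : S = ∑ z ∈ ({0}ᶜ : Finset (ZMod p)), ∑ x ∈ Δ, χ (algebraMap (ZMod p) F z * x))
    (wt : F → F → ℕ)
    (hwt : ∀ a b : F, wt a b = Set.ncard {xy : F × F | xy ≠ (0, 0) ∧
      Algebra.trace (ZMod p) F (xy.1 + xy.2 ^ (p ^ t - 1)) = 0 ∧
      Algebra.trace (ZMod p) F (a * xy.1 + b * xy.2) ≠ 0})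
    (P : Set (F × F))
    (hP : P = {ab : F × F | (∃ z : ZMod p, z ≠ 0 ∧ algebraMap (ZMod p) F z = ab.1) ∧
      ab.2 ≠ 0 ∧ ∃ v ∈ Γ, Algebra.trace E F (ab.2 * v) = 0 ∧
        Algebra.trace (ZMod p) F (v ^ (p ^ t - 1)) = 0}) :
    (P.ncard : R) = (((p : R) - 1) * ((p : R) ^ m - 1)
        + ((p : R) ^ (t + 1) - (p : R) ^ t - (p : R) + 1) * S) / p ∧
      ∀ ab ∈ P, (wt ab.1 ab.2 : R) =
        ((p : R) ^ (2 * m - 2) - (p : R) ^ (m - 2)) * ((p : R) - 1)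
          - (p : R) ^ (m - 2) * ((p : R) ^ t * ((p : R) - 1) - S) := by
  have : CharP F p := charP_of_injective_algebraMap (algebraMap (ZMod p) F).injective p
  let : Algebra (ZMod p) E := ZMod.algebra E p
  have : @IsScalarTower (ZMod p) E F Algebra.toSMul Algebra.toSMul Algebra.toSMul :=
    .of_algebraMap_eq' (Subsingleton.elim _ _)
  have := TraceCode.isQuadraticExtension_of_natCard_eq_sq (E := E) (F := F) <| by
    rw [Nat.card_eq_fintype_card, hF, hE, hm, mul_comm, pow_mul]
  have hq : (p : R) ^ t = Nat.card E := by rw [hE, Nat.cast_pow]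
  have hq_sq : (p : R) ^ m = Nat.card E ^ 2 := by rw [hm, mul_comm, pow_mul, hq]
  have hE1 := TraceCode.one_lt_natCard_base E F
  have hp0 : (p : R) ≠ 0 := hζ.neZero'.ne
  have ht : t ≠ 0 := by
    rintro rfl
    exact hE1.ne' hE
  simp only [hΓ, ← hE] at hΔ hwt hP
  replace hΔ : Δ = Polynomial.nthRootsFinset (Nat.card E + 1) 1 := by
    ext
    simp [hΔ, Polynomial.mem_nthRootsFinset]
  have hS_eq := TraceCode.sum_ne_zero_sum_addChar_trace (F := F) E
    (AddChar.zmodChar_primitive_of_primitive_root p hζ)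
  simp only [AddChar.zmodChar_apply, ← hχ, ← hΔ, ← hS, Nat.card_zmod] at hS_eq
  constructor
  · rw [hP, TraceCode.ncard_setOf_exists_mem_trace_mul_eq_zero E hα, ← hΔ, hS_eq, hq_sq,
      pow_succ (p : R) t, hq, eq_div_iff hp0]
    push_cast [hE1.le, (Fact.out : p.Prime).one_le, Nat.card_zmod]
    ring
  · rintro ⟨a, b⟩ hab
    rw [hP] at hab
    obtain ⟨⟨z, hz, rfl : _ = a⟩, hb, hv⟩ := hab
    have hw := TraceCode.natCard_sq_mul_ncard_trace_ne_zero_add E hz hb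
      ((TraceCode.exists_mem_trace_mul_eq_zero_and_iff E hα hb).1 hv)
    rw [← hwt, ← hΔ, Nat.card_zmod] at hw
    apply_fun (Nat.cast : ℕ → R) at hw
    push_cast at hw
    rw [pow_sub₀ _ hp0 (by omega), pow_sub₀ _ hp0 (by omega), mul_comm 2 m, pow_mul, hq_sq, hq]
    field_simp
    linear_combination hw - (Nat.card E : R) ^ 2 * hS_eq

/-- The number of pairs `(a,b)` with `a ∈ F_p^*`, `b ∈ F_q^*`, such that
the unique `v ∈ Γ` with `Tr_{q/t}(bv) = 0` satisfies `Tr(v^{p^t-1}) = 0`, is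
`((p-1)(p^m-1) + (p^{t+1}-p^t-p+1)·S)/p`; moreover every such pair has
`wt(a,b) = (p^{2m-2}-p^{m-2})(p-1) - p^{m-2}(p^t(p-1) - S)`. -/
theorem stmt11 (p t m : ℕ) [Fact p.Prime] (ht : 2 < t) (hm : m = 2 * t)
    (F : Type) [Field F] [Fintype F] [DecidableEq F] [Algebra (ZMod p) F]
    (hF : Fintype.card F = p ^ m)
    (E : Subfield F) (hE : Nat.card E = p ^ t)
    (α : Fˣ) (hα : ∀ x : Fˣ, x ∈ Subgroup.zpowers α)
    (Γ : Set F) (hΓ : Γ = {v : F | ∃ j ≤ p ^ t, v = (α : F) ^ j})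
    (ζ : ℂ) (hζ : ζ = Complex.exp (2 * Real.pi * Complex.I / p))
    (χ : F → ℂ) (hχ : ∀ x, χ x = ζ ^ (Algebra.trace (ZMod p) F x).val)
    (Δ : Finset F) (hΔ : Δ = univ.filter (fun x : F => x ^ (p ^ t + 1) = 1))
    (S : ℂ) (hS : S = ∑ z ∈ ({0}ᶜ : Finset (ZMod p)), ∑ x ∈ Δ, χ (algebraMap (ZMod p) F z * x))
    (wt : F → F → ℕ)
    (hwt : ∀ a b : F, wt a b = Set.ncard {xy : F × F | xy ≠ (0, 0) ∧
      Algebra.trace (ZMod p) F (xy.1 + xy.2 ^ (p ^ t - 1)) = 0 ∧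
      Algebra.trace (ZMod p) F (a * xy.1 + b * xy.2) ≠ 0})
    (P : Set (F × F))
    (hP : P = {ab : F × F | (∃ z : ZMod p, z ≠ 0 ∧ algebraMap (ZMod p) F z = ab.1) ∧
      ab.2 ≠ 0 ∧ ∃ v ∈ Γ, Algebra.trace E F (ab.2 * v) = 0 ∧
        Algebra.trace (ZMod p) F (v ^ (p ^ t - 1)) = 0}) :
    (P.ncard : ℂ) = (((p : ℂ) - 1) * ((p : ℂ) ^ m - 1)
        + ((p : ℂ) ^ (t + 1) - (p : ℂ) ^ t - (p : ℂ) + 1) * S) / p ∧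
      ∀ ab ∈ P, (wt ab.1 ab.2 : ℂ) =
        ((p : ℂ) ^ (2 * m - 2) - (p : ℂ) ^ (m - 2)) * ((p : ℂ) - 1)
          - (p : ℂ) ^ (m - 2) * ((p : ℂ) ^ t * ((p : ℂ) - 1) - S) :=
  stmt11_general p t m hm F hF E hE α hα Γ hΓ ζ
    (hζ ▸ Complex.isPrimitiveRoot_exp p (Fact.out : p.Prime).ne_zero) χ hχ Δ hΔ S hS wt hwt P hP
end
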